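/- arXiv:2505.07048 — 7 statements merged into one kernel-verified Lean document; each statement's English description precedes it below -/
import Mathlib

section
/- Let Ω be a nonempty open subset of ℂ. Then the set S_p \ S_uc is strongly 𝔠-algebrable in H(Ω)^ℕ: there exists a subset B of H(Ω)^ℕ of cardinality 𝔠 (the continuum) such that for every m ≥ 1, every choice of pairwise distinct elements b_1, …, b_m of B, and every nonzero complex polynomial P in m variables with zero constant term, the sequence P(b_1, …, b_m) (where products of sequences are taken coordinatewise, (f_n)·(g_n) = (f_n·g_n)) is a nonzero element of S_p \ S_uc. -/
open Filter Topology

set_option synthInstance.maxHeartbeats 1000000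
set_option maxHeartbeats 1000000

noncomputable section

/-- The subalgebra of `C(Ω, ℂ)` consisting of (restrictions to `Ω` of) functions
holomorphic on `Ω`. -/
def Hol (Ω : Set ℂ) : Subalgebra ℂ C(Ω, ℂ) where
  carrier := {f | ∃ g : ℂ → ℂ, DifferentiableOn ℂ g Ω ∧ ∀ z : Ω, f z = g z}
  mul_mem' := by
    rintro f₁ f₂ ⟨g₁, hg₁, he₁⟩ ⟨g₂, hg₂, he₂⟩
    exact ⟨g₁ * g₂, hg₁.mul hg₂, fun z => by simp [he₁ z, he₂ z]⟩
  add_mem' := by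
    rintro f₁ f₂ ⟨g₁, hg₁, he₁⟩ ⟨g₂, hg₂, he₂⟩
    exact ⟨g₁ + g₂, hg₁.add hg₂, fun z => by simp [he₁ z, he₂ z]⟩
  algebraMap_mem' := fun c => ⟨fun _ => c, differentiableOn_const c, fun _ => rfl⟩

/-- The space `H(Ω)^ℕ` of sequences of holomorphic functions on `Ω`, with the
product topology (each factor carrying the compact-open topology). -/
abbrev HSeq (Ω : Set ℂ) := ℕ → Hol Ω

/-- Sequences tending to `0` pointwise on `Ω`. -/
def Sp (Ω : Set ℂ) : Set (HSeq Ω) :=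
  {F | ∀ z : Ω, Tendsto (fun n => (F n : C(Ω, ℂ)) z) atTop (𝓝 0)}

/-- Sequences tending to `0` uniformly on each compact subset of `Ω`. -/
def Suc (Ω : Set ℂ) : Set (HSeq Ω) :=
  {F | ∀ K : Set Ω, IsCompact K →
    TendstoUniformlyOn (fun n (z : Ω) => (F n : C(Ω, ℂ)) z) 0 atTop K}

/-- Sequences tending to `0` uniformly on `Ω`. -/
def Su (Ω : Set ℂ) : Set (HSeq Ω) :=
  {F | TendstoUniformly (fun n (z : Ω) => (F n : C(Ω, ℂ)) z) 0 atTop}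

/-- Restriction of a holomorphic function on `Ω₂` to a subset `Ω₁ ⊆ Ω₂`. -/
def holRestrict {Ω₁ Ω₂ : Set ℂ} (h : Ω₁ ⊆ Ω₂) (f : Hol Ω₂) : Hol Ω₁ := by
  refine ⟨(f : C(Ω₂, ℂ)).comp ⟨Set.inclusion h, continuous_inclusion h⟩, ?_⟩
  obtain ⟨g, hg, he⟩ := f.2
  exact ⟨g, hg.mono h, fun z => he ⟨z, h z.2⟩⟩

end

noncomputable section

/-- A weak form of Runge's theorem: a point outside a compact set with connected complement is
separated from it by polynomials. -/
lemma exists_polynomial_eval_eq_one_of_notMem {K : Set ℂ} (hK : IsCompact K)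
    (hKc : IsPreconnected Kᶜ) {a : ℂ} (ha : a ∉ K) {ε : ℝ} (hε : 0 < ε) :
    ∃ p : Polynomial ℂ, p.eval a = 1 ∧ ∀ z ∈ K, ‖p.eval z‖ < ε := by
  have : CompactSpace K := isCompact_iff_compactSpace.mp hK
  let S : Subalgebra ℂ C(K, ℂ) := (polynomialFunctions K).topologicalClosure
  have : IsClosed (S : Set C(K, ℂ)) := (polynomialFunctions K).isClosed_topologicalClosure
  have hmem (p : Polynomial ℂ) : Polynomial.toContinuousMapOnAlgHom K p ∈ S :=
    (polynomialFunctions K).le_topologicalClosure ⟨p, trivial, rfl⟩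
  let x : S := ⟨Polynomial.toContinuousMapOnAlgHom K Polynomial.X, hmem _⟩
  have hspec : spectrum ℂ (x : C(K, ℂ)) = K := by
    rw [ContinuousMap.spectrum_eq_range]
    ext z
    simp [x]
  have hunit : IsUnit (algebraMap ℂ S a - x) := by
    rw [← spectrum.notMem_iff,
      Subalgebra.spectrum_eq_of_isPreconnected_compl S x (by rwa [hspec]), hspec]
    exact ha
  obtain ⟨y, hy⟩ := hunit.exists_right_inv
  set d : C(K, ℂ) := ((algebraMap ℂ S a - x : S) : C(K, ℂ)) with hd
  have hdy : d * (y : C(K, ℂ)) = 1 := congrArg Subtype.val hy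
  obtain ⟨_, ⟨q, -, rfl⟩, hq⟩ := Metric.mem_closure_iff.mp
    (show (y : C(K, ℂ)) ∈ closure (polynomialFunctions K : Set C(K, ℂ)) from y.2)
    (ε / (‖d‖ + 1)) (by positivity)
  refine ⟨1 - (Polynomial.C a - Polynomial.X) * q, by simp, fun z hz => ?_⟩
  have hdz : d ⟨z, hz⟩ = a - z := by simp [hd, x]
  have hone : (a - z) * (y : C(K, ℂ)) ⟨z, hz⟩ = 1 := by
    rw [← hdz]; exact DFunLike.congr_fun hdy ⟨z, hz⟩
  have hqz : ‖(y : C(K, ℂ)) ⟨z, hz⟩ - q.eval z‖ < ε / (‖d‖ + 1) := by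
    rw [dist_eq_norm] at hq
    exact (ContinuousMap.norm_coe_le_norm ((y : C(K, ℂ)) - Polynomial.toContinuousMapOnAlgHom K q)
      ⟨z, hz⟩).trans_lt hq
  have hdle : ‖a - z‖ < ‖d‖ + 1 := by
    rw [← hdz]; exact (d.norm_coe_le_norm _).trans_lt (lt_add_one _)
  calc ‖(1 - (Polynomial.C a - Polynomial.X) * q).eval z‖
      = ‖a - z‖ * ‖(y : C(K, ℂ)) ⟨z, hz⟩ - q.eval z‖ := by
        rw [← norm_mul, mul_sub, hone]; simp
    _ ≤ ‖a - z‖ * (ε / (‖d‖ + 1)) := by gcongr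
    _ < (‖d‖ + 1) * (ε / (‖d‖ + 1)) := by gcongr
    _ = ε := by field_simp

/-- The square `[-R, R] × [-R, R]` with the open horizontal strip `0 < Im z < δ` removed. -/
def slitSquare (R δ : ℝ) : Set ℂ := Set.Icc (-R) R ×ℂ (Set.Icc (-R) R ∩ (Set.Ioo 0 δ)ᶜ)

lemma isCompact_slitSquare (R δ : ℝ) : IsCompact (slitSquare R δ) :=
  isCompact_Icc.reProdIm (isCompact_Icc.inter_right isOpen_Ioo.isClosed_compl)

lemma isPreconnected_compl_slitSquare {R δ : ℝ} (hδ : 0 < δ) :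
    IsPreconnected (slitSquare R δ)ᶜ := by
  have h1 : IsPreconnected {z : ℂ | R < z.re} := (convex_halfSpace_re_gt R).isPreconnected
  have h2 : IsPreconnected {z : ℂ | z.re < -R} := (convex_halfSpace_re_lt (-R)).isPreconnected
  have h3 : IsPreconnected {z : ℂ | R < z.im} := (convex_halfSpace_im_gt R).isPreconnected
  have h4 : IsPreconnected {z : ℂ | z.im < -R} := (convex_halfSpace_im_lt (-R)).isPreconnected
  have h5 : IsPreconnected ({z : ℂ | 0 < z.im} ∩ {z : ℂ | z.im < δ}) :=
    ((convex_halfSpace_im_gt 0).inter (convex_halfSpace_im_lt δ)).isPreconnected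
  have h := (((h1.union' ⟨⟨R + 1, R + 1⟩, by simp⟩ h3).union' ⟨⟨-R - 1, R + 1⟩, by simp⟩ h2).union'
    ⟨⟨R + 1, -R - 1⟩, by simp⟩ h4).union' ⟨⟨R + 1, δ / 2⟩, by simp [hδ]⟩ h5
  convert h using 1
  ext z
  simp only [slitSquare, Complex.reProdIm, Set.mem_compl_iff, Set.mem_inter_iff, Set.mem_preimage,
    Set.mem_Icc, Set.mem_Ioo, Set.mem_union, Set.mem_ofPred_eq]
  grind

lemma eventually_mem_slitSquare (z : ℂ) :
    ∀ᶠ n : ℕ in atTop, z ∈ slitSquare n (1 / (n + 1)) := by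
  have hR : ∀ᶠ n : ℕ in atTop, ‖z‖ ≤ n := tendsto_natCast_atTop_atTop.eventually_ge_atTop _
  have hδ : ∀ᶠ n : ℕ in atTop, z.im ∉ Set.Ioo (0 : ℝ) (1 / (n + 1)) := by
    rcases le_or_gt z.im 0 with h | h
    · exact .of_forall fun n hn => h.not_gt hn.1
    · filter_upwards [tendsto_one_div_add_atTop_nhds_zero_nat.eventually_lt_const h] with n hn hn'
      exact hn.not_gt hn'.2
  filter_upwards [hR, hδ] with n hn hn'
  exact ⟨abs_le.mp ((Complex.abs_re_le_norm z).trans hn),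
    abs_le.mp ((Complex.abs_im_le_norm z).trans hn), hn'⟩

/-- Polynomials tending to `0` pointwise, arbitrarily fast, that equal `1` along a sequence of
points converging to `0`. -/
lemma exists_polynomial_seq (ε : ℕ → ℝ) (hε : ∀ n, 0 < ε n) :
    ∃ (p : ℕ → Polynomial ℂ) (a : ℕ → ℂ), Tendsto a atTop (𝓝 0) ∧ (∀ n, (p n).eval (a n) = 1) ∧
      ∀ z, ∀ᶠ n in atTop, ‖(p n).eval z‖ < ε n := by
  let a : ℕ → ℂ := fun n => ((1 / (n + 1) / 2 : ℝ) : ℂ) * Complex.I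
  have ha (n : ℕ) : a n ∉ slitSquare n (1 / (n + 1)) := by
    have hn : (0 : ℝ) < 1 / (n + 1) := by positivity
    rintro ⟨-, -, h⟩
    refine h ?_
    simp only [a, Complex.mul_im, Complex.ofReal_re, Complex.ofReal_im, Complex.I_re,
      Complex.I_im, mul_one, mul_zero, add_zero]
    exact ⟨half_pos hn, half_lt_self hn⟩
  choose p hp1 hp2 using fun n : ℕ => exists_polynomial_eval_eq_one_of_notMem
    (isCompact_slitSquare n (1 / (n + 1)))
    (isPreconnected_compl_slitSquare (by positivity)) (ha n) (hε n)
  refine ⟨p, a, ?_, hp1, fun z => ?_⟩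
  · have h := (tendsto_one_div_add_atTop_nhds_zero_nat (𝕜 := ℝ)).div_const 2
    simpa [a] using (((Complex.continuous_ofReal.tendsto _).comp h).mul_const Complex.I)
  · filter_upwards [eventually_mem_slitSquare z] with n hn using hp2 n z hn

/-- An independent family, indexed by the Cantor space, of sequences of natural numbers that are
dominated by a common sequence. -/
lemma exists_independent_seq :
    ∃ (v : (ℕ → Bool) → ℕ → ℕ) (G : ℕ → ℕ), (∀ x n, v x n ≤ G n) ∧
      ∀ (m : ℕ) (x : Fin m → ℕ → Bool), Function.Injective x → ∀ w : Fin m → ℕ,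
        ∃ᶠ n in atTop, ∀ i, v (x i) n = w i := by
  obtain ⟨e, he⟩ := exists_surjective_nat (Σ k : ℕ, ((Fin k → Bool) → ℕ))
  refine ⟨fun x n => (e n).2 fun j => x j, fun n => ∑ s, (e n).2 s,
    fun x n => Finset.single_le_sum (fun _ _ => Nat.zero_le _) (Finset.mem_univ _),
    fun m x hx w => ?_⟩
  have hsep : ∀ᶠ k in atTop, Function.Injective fun (i : Fin m) (j : Fin k) => x i j := by
    have hpair (i i' : Fin m) :
        ∀ᶠ k in atTop, (fun j : Fin k => x i j) = (fun j : Fin k => x i' j) → i = i' := by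
      by_cases h : i = i'
      · exact .of_forall fun _ _ => h
      · obtain ⟨j, hj⟩ := Function.ne_iff.mp (hx.ne h)
        filter_upwards [eventually_gt_atTop j] with k hk hk'
        exact absurd (congrFun hk' ⟨j, hk⟩) hj
    filter_upwards [eventually_all.mpr fun i => eventually_all.mpr (hpair i)] with k hk i i' h
    exact hk i i' h
  rw [Nat.frequently_atTop_iff_infinite]
  let φ (k : ℕ) : Σ k : ℕ, ((Fin k → Bool) → ℕ) :=
    ⟨k, Function.extend (fun (i : Fin m) (j : Fin k) => x i j) w 0⟩
  have hφ : Function.Injective φ := fun k k' h => congrArg Sigma.fst h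
  have hinf := ((Nat.frequently_atTop_iff_infinite.mp hsep.frequently).image hφ.injOn).preimage
    (f := e) (by simp [he.range_eq])
  refine hinf.mono ?_
  rintro n ⟨k, hk, hkn⟩ i
  change (e n).2 (fun j => x i j) = w i
  rw [← hkn]
  exact hk.extend_apply w 0 i

/-- The restriction of a polynomial to `Ω`, translated by `c`. -/
def polyHol (Ω : Set ℂ) (c : ℂ) (p : Polynomial ℂ) : Hol Ω :=
  ⟨⟨fun z => p.eval ((z : ℂ) - c), by fun_prop⟩,
    fun z => p.eval (z - c), by fun_prop, fun _ => rfl⟩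

/-- Evaluation of the `n`-th term of a sequence at a point. -/
def evalHom {Ω : Set ℂ} (n : ℕ) (z : Ω) : HSeq Ω →ₐ[ℂ] ℂ :=
  ((ContinuousMap.evalAlgHom ℂ ℂ z).comp (Hol Ω).val).comp (Pi.evalAlgHom ℂ (fun _ => Hol Ω) n)

lemma aeval_apply {Ω : Set ℂ} {σ : Type*} (b : σ → HSeq Ω) (P : MvPolynomial σ ℂ) (n : ℕ)
    (z : Ω) : ((MvPolynomial.aeval b P n : Hol Ω) : C(Ω, ℂ)) z =
      MvPolynomial.eval (fun i => ((b i n : Hol Ω) : C(Ω, ℂ)) z) P := by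
  change evalHom n z (MvPolynomial.aeval b P) = _
  rw [← MvPolynomial.aeval_eq_eval, ← AlgHom.comp_apply, MvPolynomial.comp_aeval]
  rfl

lemma aeval_mem_Sp {Ω : Set ℂ} {σ : Type*} [Finite σ] {b : σ → HSeq Ω} (hb : ∀ i, b i ∈ Sp Ω)
    {P : MvPolynomial σ ℂ} (hP : P.coeff 0 = 0) : MvPolynomial.aeval b P ∈ Sp Ω := by
  intro z
  simp only [aeval_apply]
  have h := ((MvPolynomial.continuous_eval P).tendsto 0).comp
    (tendsto_pi_nhds.mpr fun i => hb i z)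
  rwa [MvPolynomial.eval_zero, MvPolynomial.constantCoeff_eq, hP] at h

lemma exists_eval_natCast_ne_zero {σ : Type*} {P : MvPolynomial σ ℂ} (hP : P ≠ 0) :
    ∃ w : σ → ℕ, MvPolynomial.eval (fun i => (w i : ℂ)) P ≠ 0 := by
  contrapose! hP
  refine MvPolynomial.funext_set (fun _ => Set.range ((↑) : ℕ → ℂ))
    (fun _ => Set.infinite_range_of_injective Nat.cast_injective) fun x hx => ?_
  choose w hw using fun i => hx i trivial
  obtain rfl : (fun i => (w i : ℂ)) = x := funext hw
  rw [hP w, map_zero]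

/-- A sequence attaining a fixed nonzero value frequently along points converging inside `Ω` does
not tend to `0` locally uniformly. -/
lemma notMem_Suc {Ω : Set ℂ} (hΩ : IsOpen Ω) {F : HSeq Ω} {z₀ : ℂ} (hz₀ : z₀ ∈ Ω) {u : ℕ → ℂ}
    (hu : Tendsto u atTop (𝓝 z₀)) {c : ℂ} (hc : c ≠ 0)
    (hF : ∃ᶠ n in atTop, ∀ h : u n ∈ Ω, (F n : C(Ω, ℂ)) ⟨u n, h⟩ = c) : F ∉ Suc Ω := by
  intro hS
  obtain ⟨r, hr, hrΩ⟩ := Metric.nhds_basis_closedBall.mem_iff.mp (hΩ.mem_nhds hz₀)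
  have hK : IsCompact ((↑) ⁻¹' Metric.closedBall z₀ r : Set Ω) :=
    Topology.IsInducing.subtypeVal.isCompact_preimage' (isCompact_closedBall z₀ r)
      (by simpa using hrΩ)
  obtain ⟨n, hn, hur, hnc⟩ := (hF.and_eventually
    ((hu.eventually (Metric.closedBall_mem_nhds z₀ hr)).and
      (Metric.tendstoUniformlyOn_iff.mp (hS _ hK) ‖c‖ (norm_pos_iff.mpr hc)))).exists
  have h := hnc ⟨u n, hrΩ hur⟩ hur
  rw [hn (hrΩ hur)] at h
  simp at h

end

/-- `S_p \ S_uc` is strongly `𝔠`-algebrable in `H(Ω)^ℕ`: there is a set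
`B ⊆ H(Ω)^ℕ` of cardinality `𝔠` such that for all `m ≥ 1`, all pairwise distinct
`b_1, …, b_m ∈ B` and every nonzero polynomial `P` in `m` variables with zero constant
term, `P(b_1, …, b_m)` (products taken coordinatewise) is a nonzero element of
`S_p \ S_uc`. -/
theorem Sp_diff_Suc_strongly_continuum_algebrable
    (Ω : Set ℂ) (hΩ : IsOpen Ω) (hne : Ω.Nonempty) :
    ∃ B : Set (HSeq Ω), Cardinal.mk B = Cardinal.continuum ∧
      ∀ (m : ℕ), 1 ≤ m → ∀ b : Fin m → HSeq Ω,
        Function.Injective b → (∀ i, b i ∈ B) →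
        ∀ P : MvPolynomial (Fin m) ℂ, P ≠ 0 → MvPolynomial.coeff 0 P = 0 →
          MvPolynomial.aeval b P ≠ 0 ∧ MvPolynomial.aeval b P ∈ Sp Ω \ Suc Ω := by
  obtain ⟨z₀, hz₀⟩ := hne
  obtain ⟨v, G, hvG, hv⟩ := exists_independent_seq
  obtain ⟨p, a, ha, hpa, hp⟩ := exists_polynomial_seq (fun n => 1 / ((G n + 1) * (n + 1)))
    (fun n => by positivity)
  let f (x : ℕ → Bool) : HSeq Ω := fun n => (v x n : ℂ) • polyHol Ω z₀ (p n)
  have hf (x : ℕ → Bool) (n : ℕ) (z : Ω) :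
      ((f x n : Hol Ω) : C(Ω, ℂ)) z = v x n * (p n).eval ((z : ℂ) - z₀) := rfl
  have hu : Tendsto (fun n => z₀ + a n) atTop (𝓝 z₀) := by simpa using ha.const_add z₀
  have hSp (x : ℕ → Bool) : f x ∈ Sp Ω := by
    intro z
    refine squeeze_zero_norm' ?_ (tendsto_one_div_add_atTop_nhds_zero_nat (𝕜 := ℝ))
    filter_upwards [hp ((z : ℂ) - z₀)] with n hn
    have hvn : (v x n : ℝ) ≤ G n + 1 := by exact_mod_cast (hvG x n).trans (Nat.le_succ _)
    rw [hf, norm_mul, Complex.norm_natCast]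
    calc (v x n : ℝ) * ‖(p n).eval ((z : ℂ) - z₀)‖
        ≤ (G n + 1) * (1 / ((G n + 1) * (n + 1))) := by gcongr
      _ = 1 / (n + 1) := by field_simp
  have hSuc (m : ℕ) (x : Fin m → ℕ → Bool) (hx : Function.Injective x)
      (P : MvPolynomial (Fin m) ℂ) (hP : P ≠ 0) :
      MvPolynomial.aeval (fun i => f (x i)) P ∉ Suc Ω := by
    obtain ⟨w, hw⟩ := exists_eval_natCast_ne_zero hP
    refine notMem_Suc hΩ hz₀ hu hw ((hv m x hx w).mono fun n hn h => ?_)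
    simp [aeval_apply, hf, hn, hpa]
  have hzero : (0 : HSeq Ω) ∈ Suc Ω := fun K _ =>
    Metric.tendstoUniformlyOn_iff.mpr fun ε hε => .of_forall fun n z _ => by simpa using hε
  have hinj : Function.Injective f := by
    intro x y hxy
    by_contra hne
    have hX : (MvPolynomial.X 0 - MvPolynomial.X 1 : MvPolynomial (Fin 2) ℂ) ≠ 0 :=
      sub_ne_zero.mpr (MvPolynomial.X_injective.ne (by decide))
    refine hSuc 2 ![x, y] ?_ _ hX (by simpa [hxy, sub_self (f y)] using hzero)
    simpa [Function.Injective, Fin.forall_fin_two, eq_comm] using hne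
  refine ⟨Set.range f, by simp [Cardinal.mk_range_eq f hinj], fun m _ b hb hbB P hP hP0 => ?_⟩
  choose x hx using hbB
  obtain rfl : (fun i => f (x i)) = b := funext hx
  have hns := hSuc m x (fun i j h => hb (congrArg f h)) P hP
  exact ⟨fun h => hns (h ▸ hzero), aeval_mem_Sp (fun i => hSp (x i)) hP0, hns⟩
end

section
/- Let Ω be a nonempty open subset of ℂ. Then the set S_p \ S_uc is infinitely pointwise 𝔠-dense-lineable in H(Ω)^ℕ: for every x ∈ S_p \ S_uc there exists a countable family {W_k : k ∈ ℕ} of vector subspaces of H(Ω)^ℕ such that each W_k is dense in H(Ω)^ℕ, each W_k has dimension 𝔠, x ∈ W_k ⊆ (S_p \ S_uc) ∪ {0} for every k, and W_k ∩ W_n = span{x} whenever k ≠ n. -/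
open Filter Topology

set_option synthInstance.maxHeartbeats 1000000
set_option maxHeartbeats 1000000

/-- An infinite set of naturals can be cut into infinitely many infinite pieces. -/
lemma exists_frequently_and_eq {p : ℕ → Prop} (hp : ∃ᶠ n in atTop, p n) :
    ∃ π : ℕ → ℕ, ∀ j, ∃ᶠ n in atTop, p n ∧ π n = j := by
  classical
  have hinf : {n | p n}.Infinite := Nat.frequently_atTop_iff_infinite.mp hp
  refine ⟨fun n => (Nat.unpair (Nat.count p n)).1, fun j => frequently_atTop.mpr fun m => ?_⟩
  refine ⟨Nat.nth p (Nat.pair j m), ?_, Nat.nth_mem_of_infinite hinf _, ?_⟩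
  · exact (Nat.right_le_pair j m).trans ((Nat.nth_strictMono hinf).id_le _)
  · simp [Nat.count_nth_of_infinite hinf]

/-- Distinct geometric sequences are linearly independent. -/
lemma linearIndependent_geometric {A : Type*} {e : A → ℂ} (he : Function.Injective e) :
    LinearIndependent ℂ (fun a (n : ℕ) => e a ^ n) := by
  have h := (linearIndependent_monoidHom (Multiplicative ℕ) ℂ).comp
    (fun a => powersHom ℂ (e a)) ((powersHom ℂ).injective.comp he)
  exact h

lemma frequently_le_norm_of_notMem_Suc {Ω : Set ℂ} {x : HSeq Ω} (hx : x ∉ Suc Ω) :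
    ∃ K : Set Ω, IsCompact K ∧ ∃ ε > 0, ∃ᶠ n in atTop, ∃ z ∈ K, ε ≤ ‖(x n : C(Ω, ℂ)) z‖ := by
  simp only [Suc, Set.mem_ofPred_eq, not_forall, Metric.tendstoUniformlyOn_iff] at hx
  obtain ⟨K, hK, ε, hε, h⟩ := hx
  refine ⟨K, hK, ε, hε, fun h' => h (h'.mono fun n hn z hz => ?_)⟩
  have := not_le.mp fun hle => hn ⟨z, hz, hle⟩
  simpa [dist_eq_norm] using this

/-- A sequence eventually equal to `p (π n) • x n`, with `p` bounded and nonzero, converges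
pointwise but not compactly if `x` is pointwise null and is large on `K` infinitely often in each
fibre of `π`. -/
lemma mem_Sp_diff_Suc_of_eventually_eq_smul {Ω : Set ℂ} {x y : HSeq Ω} (hx : x ∈ Sp Ω)
    {K : Set Ω} (hK : IsCompact K) {ε : ℝ} (hε : 0 < ε) {π : ℕ → ℕ}
    (hπ : ∀ j, ∃ᶠ n in atTop, (∃ z ∈ K, ε ≤ ‖(x n : C(Ω, ℂ)) z‖) ∧ π n = j)
    {p : ℕ → ℂ} {C : ℝ} (hC : ∀ j, ‖p j‖ ≤ C) (hp : p ≠ 0)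
    (hy : ∀ᶠ n in atTop, y n = p (π n) • x n) : y ∈ Sp Ω \ Suc Ω := by
  have hy' : ∀ᶠ n in atTop, ∀ z, (y n : C(Ω, ℂ)) z = p (π n) * (x n : C(Ω, ℂ)) z :=
    hy.mono fun n hn z => by simp [hn]
  constructor
  · intro z
    have h0 : Tendsto (fun n => C * ‖(x n : C(Ω, ℂ)) z‖) atTop (𝓝 0) := by
      simpa using (hx z).norm.const_mul C
    refine squeeze_zero_norm' (hy'.mono fun n hn => ?_) h0
    rw [hn z, norm_mul]
    exact mul_le_mul_of_nonneg_right (hC _) (norm_nonneg _)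
  · intro hS
    obtain ⟨j, hj⟩ := Function.ne_iff.mp hp
    have hpos : 0 < ‖p j‖ := norm_pos_iff.mpr hj
    have hu := Metric.tendstoUniformlyOn_iff.mp (hS K hK) (‖p j‖ * ε) (by positivity)
    obtain ⟨n, ⟨⟨z, hz, hle⟩, rfl⟩, hn, hyn⟩ := ((hπ j).and_eventually (hu.and hy')).exists
    have h := hn z hz
    rw [hyn z] at h
    simp only [Pi.zero_apply, dist_zero_left, norm_mul] at h
    exact absurd hle (not_le.mpr (lt_of_mul_lt_mul_left h hpos.le))

lemma linearCombination_mem_Sp_diff_Suc {Ω : Set ℂ} {x : HSeq Ω} (hx : x ∈ Sp Ω)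
    {K : Set Ω} (hK : IsCompact K) {ε : ℝ} (hε : 0 < ε) {π : ℕ → ℕ}
    (hπ : ∀ j, ∃ᶠ n in atTop, (∃ z ∈ K, ε ≤ ‖(x n : C(Ω, ℂ)) z‖) ∧ π n = j)
    {A : Type*} {e : A → ℂ} (he : Function.Injective e) (he1 : ∀ a, ‖e a‖ ≤ 1)
    {w : A → HSeq Ω} (hw : ∀ a, ∀ᶠ n in atTop, w a n = e a ^ π n • x n)
    {l : A →₀ ℂ} (hl : l ≠ 0) : Finsupp.linearCombination ℂ w l ∈ Sp Ω \ Suc Ω := by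
  refine mem_Sp_diff_Suc_of_eventually_eq_smul hx hK hε hπ
    (p := Finsupp.linearCombination ℂ (fun a (n : ℕ) => e a ^ n) l)
    (C := ∑ a ∈ l.support, ‖l a‖) (fun j => ?_) (fun h => hl ?_) ?_
  · simp only [Finsupp.linearCombination_apply, Finsupp.sum, Finset.sum_apply, Pi.smul_apply,
      smul_eq_mul]
    refine norm_sum_le_of_le _ fun a _ => ?_
    rw [norm_mul, norm_pow]
    exact mul_le_of_le_one_right (norm_nonneg _) (pow_le_one₀ (norm_nonneg _) (he1 a))
  · exact (linearIndependent_iff.mp (linearIndependent_geometric he)) l h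
  · filter_upwards [(eventually_all_finset l.support).mpr fun a _ => hw a] with n hn
    simp only [Finsupp.linearCombination_apply, Finsupp.sum, Finset.sum_apply, Pi.smul_apply,
      Finset.sum_smul, smul_assoc]
    exact Finset.sum_congr rfl fun a ha => by rw [hn a ha]

lemma zero_mem_Suc (Ω : Set ℂ) : (0 : HSeq Ω) ∈ Suc Ω := fun _ _ =>
  Metric.tendstoUniformlyOn_iff.mpr fun _ hε => Eventually.of_forall fun _ _ _ => by simpa using hε

lemma linearIndependent_of_notMem_Suc {Ω : Set ℂ} {A : Type*} {w : A → HSeq Ω}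
    (h : ∀ l : A →₀ ℂ, l ≠ 0 → Finsupp.linearCombination ℂ w l ∉ Suc Ω) :
    LinearIndependent ℂ w := by
  intro l l' hl
  by_contra hne
  refine h (l + (-1 : ℂ) • l') (fun h0 => hne ?_) ?_
  · rwa [neg_one_smul, ← sub_eq_add_neg, sub_eq_zero] at h0
  · have h0 : Finsupp.linearCombination ℂ w (l + (-1 : ℂ) • l') = 0 := by
      rw [map_add, map_smul, hl]
      nth_rewrite 1 [← one_smul ℂ (Finsupp.linearCombination ℂ w l')]
      rw [← add_smul, add_neg_cancel, zero_smul]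
    rw [h0]
    exact zero_mem_Suc Ω

lemma exists_injective_norm_le_one {J : Type} (hJ : Cardinal.mk J ≤ Cardinal.continuum) :
    ∃ e : Option J → ℂ, Function.Injective e ∧ (∀ a, ‖e a‖ ≤ 1) ∧ e none = 1 := by
  rw [← Cardinal.mk_Ioo_real (zero_lt_one' ℝ)] at hJ
  obtain ⟨f⟩ := hJ
  refine ⟨fun a => a.elim 1 fun j => ((f j : ℝ) : ℂ), ?_, ?_, rfl⟩
  · rintro (_ | i) (_ | j) h
    · rfl
    · exact absurd (Complex.ofReal_eq_one.mp h.symm) (f j).2.2.ne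
    · exact absurd (Complex.ofReal_eq_one.mp h) (f i).2.2.ne
    · exact congrArg some (f.injective (Subtype.ext (Complex.ofReal_injective h)))
  · rintro (_ | j)
    · simp
    · simpa [abs_of_pos (f j).2.1] using (f j).2.2.le

lemma separableSpace_HSeq {Ω : Set ℂ} (hΩ : IsOpen Ω) : TopologicalSpace.SeparableSpace (HSeq Ω) := by
  have := hΩ.locallyCompactSpace
  have : SecondCountableTopology (Hol Ω) :=
    Topology.IsEmbedding.subtypeVal.secondCountableTopology
  infer_instance

/-- `S_p \ S_uc` is infinitely pointwise `𝔠`-dense-lineable in `H(Ω)^ℕ`. -/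
theorem Sp_diff_Suc_infinitely_pointwise_continuum_dense_lineable
    (Ω : Set ℂ) (hΩ : IsOpen Ω) (hne : Ω.Nonempty) :
    ∀ x ∈ Sp Ω \ Suc Ω, ∃ W : ℕ → Submodule ℂ (HSeq Ω),
      (∀ k, Dense (W k : Set (HSeq Ω))) ∧
      (∀ k, Module.rank ℂ (W k) = Cardinal.continuum) ∧
      (∀ k, x ∈ W k) ∧
      (∀ k, (W k : Set (HSeq Ω)) ⊆ (Sp Ω \ Suc Ω) ∪ {0}) ∧
      (∀ k n, k ≠ n → W k ⊓ W n = Submodule.span ℂ {x}) := by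
  classical
  rintro x ⟨hx, hxu⟩
  obtain ⟨K, hK, ε, hε, hfreq⟩ := frequently_le_norm_of_notMem_Suc hxu
  obtain ⟨π, hπ⟩ := exists_frequently_and_eq hfreq
  have := separableSpace_HSeq hΩ
  let u := TopologicalSpace.denseSeq (HSeq Ω)
  obtain ⟨e, he, he1, he0⟩ := exists_injective_norm_le_one (J := ℕ × ℕ × ℕ × ℝ)
    (by simp [Cardinal.mk_real])
  let w : Option (ℕ × ℕ × ℕ × ℝ) → HSeq Ω := fun a =>
    a.elim x fun j n => if n < j.2.1 then u j.2.2.1 n else e (some j) ^ π n • x n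
  have hw : ∀ a, ∀ᶠ n in atTop, w a n = e a ^ π n • x n := by
    rintro (_ | j)
    · simp [w, he0]
    · filter_upwards [eventually_ge_atTop j.2.1] with n hn
      simp [w, not_lt.mpr hn]
  have hmem : ∀ l : Option (ℕ × ℕ × ℕ × ℝ) →₀ ℂ, l ≠ 0 →
      Finsupp.linearCombination ℂ w l ∈ Sp Ω \ Suc Ω := fun l hl =>
    linearCombination_mem_Sp_diff_Suc hx hK hε hπ he he1 hw hl
  have hind : LinearIndependent ℂ w := linearIndependent_of_notMem_Suc fun l hl => (hmem l hl).2
  let S : ℕ → Option (ℕ × ℕ × ℝ) → Option (ℕ × ℕ × ℕ × ℝ) := fun k => Option.map (Prod.mk k)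
  have hS k : Function.Injective (S k) := Option.map_injective (Prod.mk_right_injective k)
  have hspan k : Submodule.span ℂ (Set.range (w ∘ S k)) =
      (Finsupp.supported ℂ ℂ (Set.range (S k))).map (Finsupp.linearCombination ℂ w) := by
    rw [Set.range_comp, Finsupp.span_image_eq_map_linearCombination]
  refine ⟨fun k => Submodule.span ℂ (Set.range (w ∘ S k)), fun k => ?_, fun k => ?_, fun k => ?_,
    fun k => ?_, fun k n hkn => ?_⟩
  · rw [← dense_closure]
    refine (TopologicalSpace.denseRange_denseSeq (HSeq Ω)).mono ?_
    rintro _ ⟨i, rfl⟩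
    refine mem_closure_of_tendsto (b := atTop) (f := fun m => w (S k (some (m, i, 0)))) ?_
      (Eventually.of_forall fun m => Submodule.subset_span ⟨some (m, i, 0), rfl⟩)
    refine tendsto_pi_nhds.mpr fun n => tendsto_const_nhds.congr' ?_
    filter_upwards [eventually_gt_atTop n] with m hm
    simp [w, S, u, hm]
  · rw [rank_span (hind.comp _ (hS k)), Cardinal.mk_range_eq _ (hind.injective.comp (hS k))]
    simp [Cardinal.mk_real, Cardinal.add_one_eq Cardinal.aleph0_le_continuum]
  · exact Submodule.subset_span ⟨none, rfl⟩
  · intro y hy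
    replace hy := (hspan k).le hy
    obtain ⟨l, -, rfl⟩ := hy
    by_cases hl : l = 0
    · simp [hl]
    · exact Or.inl (hmem l hl)
  · have hinter : Set.range (S k) ∩ Set.range (S n) = {none} := by
      ext (_ | j)
      · simpa using ⟨⟨none, rfl⟩, ⟨none, rfl⟩⟩
      · simp only [S, Set.mem_inter_iff, Set.mem_range, Option.map_eq_some_iff]
        grind
    beta_reduce
    rw [hspan, hspan, ← Submodule.map_inf _ hind, ← Finsupp.supported_inter, hinter,
      ← Finsupp.span_image_eq_map_linearCombination, Set.image_singleton]
    rfl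
end

section
/- Let Ω be a nonempty open subset of ℂ. Then the set S_uc \ S_u is infinitely pointwise 𝔠-dense-lineable in H(Ω)^ℕ: for every x ∈ S_uc \ S_u there exists a countable family {W_k : k ∈ ℕ} of vector subspaces of H(Ω)^ℕ such that each W_k is dense in H(Ω)^ℕ, each W_k has dimension 𝔠, x ∈ W_k ⊆ (S_uc \ S_u) ∪ {0} for every k, and W_k ∩ W_n = span{x} whenever k ≠ n. -/
open Filter Topology

set_option synthInstance.maxHeartbeats 1000000
set_option maxHeartbeats 1000000

section Cardinality

open Cardinal

theorem mk_hol_le_continuum {Ω : Set ℂ} (hne : Ω.Nonempty) : #(Hol Ω) ≤ 𝔠 := by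
  have : Nonempty Ω := hne.to_subtype
  have hinj : Function.Injective
      (fun (f : Hol Ω) (n : ℕ) => (f : C(Ω, ℂ)) (TopologicalSpace.denseSeq Ω n)) := by
    intro f g h
    apply Subtype.ext
    apply ContinuousMap.ext
    exact congrFun ((TopologicalSpace.denseRange_denseSeq Ω).equalizer
      (f : C(Ω, ℂ)).continuous (g : C(Ω, ℂ)).continuous h)
  simpa using Cardinal.mk_le_of_injective hinj

theorem mk_hSeq {Ω : Set ℂ} (hne : Ω.Nonempty) : #(HSeq Ω) = 𝔠 := by
  apply le_antisymm
  · calc #(HSeq Ω) = #(Hol Ω) ^ ℵ₀ := by simp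
      _ ≤ 𝔠 ^ ℵ₀ := Cardinal.power_le_power_right (mk_hol_le_continuum hne)
      _ = 𝔠 := Cardinal.continuum_power_aleph0
  · obtain ⟨z, hz⟩ := hne
    have hinj : Function.Injective
        (fun (c : ℂ) (_ : ℕ) => algebraMap ℂ (Hol Ω) c) := by
      intro c d h
      have := congrArg (fun f : Hol Ω => (f : C(Ω, ℂ)) ⟨z, hz⟩) (congrFun h 0)
      simpa using this
    simpa using Cardinal.mk_le_of_injective hinj

end Cardinality

theorem zero_mem_Su (Ω : Set ℂ) : (0 : HSeq Ω) ∈ Su Ω := by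
  rw [Su, Set.mem_ofPred_eq, Metric.tendstoUniformly_iff]
  intro ε hε
  simp [hε]

theorem mem_Suc_iff {Ω : Set ℂ} {F : HSeq Ω} :
    F ∈ Suc Ω ↔ ∀ K : Set Ω, IsCompact K → ∀ ε > 0, ∀ᶠ n in atTop, ∀ z ∈ K,
      ‖(F n : C(Ω, ℂ)) z‖ < ε := by
  simp [Suc, Metric.tendstoUniformlyOn_iff]

/-- `S_uc` as a vector subspace of `H(Ω)^ℕ`. -/
def sucSubmodule (Ω : Set ℂ) : Submodule ℂ (HSeq Ω) where
  carrier := Suc Ω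
  zero_mem' := mem_Suc_iff.2 fun K _ ε hε => by simp [hε]
  add_mem' := by
    intro F G hF hG
    rw [mem_Suc_iff] at *
    intro K hK ε hε
    filter_upwards [hF K hK (ε / 2) (half_pos hε), hG K hK (ε / 2) (half_pos hε)]
      with n h₁ h₂ z hz
    have := norm_add_le ((F n : C(Ω, ℂ)) z) ((G n : C(Ω, ℂ)) z)
    simp only [Pi.add_apply, Subalgebra.coe_add, ContinuousMap.add_apply]
    linarith [h₁ z hz, h₂ z hz]
  smul_mem' := by
    intro c F hF
    rw [mem_Suc_iff] at *
    intro K hK ε hε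
    have hc : 0 < ‖c‖ + 1 := by positivity
    filter_upwards [hF K hK (ε / (‖c‖ + 1)) (div_pos hε hc)] with n h z hz
    have h' := (lt_div_iff₀ hc).1 (h z hz)
    have := norm_nonneg ((F n : C(Ω, ℂ)) z)
    simp only [Pi.smul_apply, Subalgebra.coe_smul, ContinuousMap.smul_apply, norm_smul]
    linarith

/-- An element of `S_uc` stays in `S_uc` after multiplication by a bounded scalar sequence and a
change of finitely many terms. -/
theorem mem_Suc_of_eventually_eq_smul {Ω : Set ℂ} {x F : HSeq Ω} (hx : x ∈ Suc Ω) {a : ℕ → ℂ}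
    (ha : ∀ n, ‖a n‖ ≤ 1) (hF : ∀ᶠ n in atTop, F n = a n • x n) : F ∈ Suc Ω := by
  rw [mem_Suc_iff] at *
  intro K hK ε hε
  filter_upwards [hx K hK ε hε, hF] with n h hn z hz
  rw [hn]
  simp only [Subalgebra.coe_smul, ContinuousMap.smul_apply, norm_smul]
  exact (mul_le_of_le_one_left (norm_nonneg _) (ha n)).trans_lt (h z hz)

/-- For `x ∉ S_u` there is a partition of `ℕ`, given by the fibres of `σ`, such that the
suprema of `|x n|` do not tend to `0` along any piece. -/
theorem exists_frequently_le_norm {Ω : Set ℂ} {x : HSeq Ω} (hx : x ∉ Su Ω) :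
    ∃ ε > 0, ∃ σ : ℕ → ℕ, ∀ j, ∃ᶠ n in atTop, σ n = j ∧ ∃ z, ε ≤ ‖(x n : C(Ω, ℂ)) z‖ := by
  classical
  rw [Su, Set.mem_ofPred_eq, Metric.tendstoUniformly_iff] at hx
  push Not at hx
  obtain ⟨ε, hε, h⟩ := hx
  set P : ℕ → Prop := fun n => ∃ z, ε ≤ ‖(x n : C(Ω, ℂ)) z‖
  have hP : {n | P n}.Infinite := by
    rw [← Nat.frequently_atTop_iff_infinite]
    simpa [P] using h
  refine ⟨ε, hε, fun n => (Nat.unpair (Nat.count P n)).1, fun j => ?_⟩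
  rw [frequently_atTop]
  intro N
  refine ⟨Nat.nth P (Nat.pair j N), ?_, ?_, Nat.nth_mem_of_infinite hP _⟩
  · exact (Nat.right_le_pair j N).trans (Nat.nth_strictMono hP).le_apply
  · simp only [Nat.count_nth_of_infinite hP, Nat.unpair_pair]

theorem finsupp_eq_zero_of_sum_mul_pow {ι : Type*} {ψ : ι → ℂ} (hψ : Function.Injective ψ)
    {c : ι →₀ ℂ} (hc : ∀ j : ℕ, (c.sum fun i a => a * ψ i ^ j) = 0) : c = 0 := by
  have hli : LinearIndependent ℂ (fun i => (powersHom ℂ (ψ i) : Multiplicative ℕ → ℂ)) :=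
    (linearIndependent_monoidHom (Multiplicative ℕ) ℂ).comp _
      ((powersHom ℂ).injective.comp hψ)
  refine linearIndependent_iff.1 hli c (funext fun j => ?_)
  simpa [Finsupp.linearCombination_apply, Finsupp.sum, Finset.sum_apply] using hc j.toAdd

section LinearAlgebra

/-! An additive commutative monoid is assumed, rather than a group, so that for `V = HSeq Ω`
unification does not have to compare the two paths to its additive structure. -/

variable {ι V : Type*} [AddCommMonoid V] [Module ℂ V] {v : ι → V}

theorem linearIndependent_of_linearCombination_mem {s : Set V} (h₀ : (0 : V) ∈ s)
    (h : ∀ c, Finsupp.linearCombination ℂ v c ∈ s → c = 0) : LinearIndependent ℂ v := by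
  let _ : AddCommGroup V := Module.addCommMonoidToAddCommGroup ℂ
  exact linearIndependent_iff.2 fun c hc => h c (hc ▸ h₀)

theorem rank_span_image_of_linearIndependent (hv : LinearIndependent ℂ v) (s : Set ι) :
    Module.rank ℂ (Submodule.span ℂ (v '' s)) = Cardinal.mk (v '' s) := by
  let _ : AddCommGroup V := Module.addCommMonoidToAddCommGroup ℂ
  exact rank_span_set (hv.linearIndepOn s).id_image

theorem span_image_inf_span_image_of_linearIndependent (hv : LinearIndependent ℂ v)
    (s t : Set ι) :
    Submodule.span ℂ (v '' s) ⊓ Submodule.span ℂ (v '' t) = Submodule.span ℂ (v '' (s ∩ t)) := by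
  simp only [Finsupp.span_image_eq_map_linearCombination]
  rw [Finsupp.supported_inter, Submodule.map_inf _ hv]

end LinearAlgebra

section Perturbation

variable {Ω : Set ℂ} {x : HSeq Ω} {ι : Type*} {ψ : ι → ℂ} {g : ι → HSeq Ω} {σ : ℕ → ℕ}

theorem eventually_linearCombination_eq (hg : ∀ i, ∀ᶠ n in atTop, g i n = ψ i ^ σ n • x n)
    (c : ι →₀ ℂ) : ∀ᶠ n in atTop,
      Finsupp.linearCombination ℂ g c n = (c.sum fun i a => a * ψ i ^ σ n) • x n := by
  filter_upwards [(Filter.eventually_all_finset c.support).2 fun i _ => hg i] with n hn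
  simp only [Finsupp.linearCombination_apply, Finsupp.sum, Finset.sum_apply, Pi.smul_apply,
    Finset.sum_smul]
  exact Finset.sum_congr rfl fun i hi => by rw [hn i hi, smul_smul]

theorem eq_zero_of_linearCombination_mem_Su (hψ : Function.Injective ψ)
    (hg : ∀ i, ∀ᶠ n in atTop, g i n = ψ i ^ σ n • x n) {ε : ℝ} (hε : 0 < ε)
    (hσ : ∀ j, ∃ᶠ n in atTop, σ n = j ∧ ∃ z, ε ≤ ‖(x n : C(Ω, ℂ)) z‖)
    {c : ι →₀ ℂ} (hc : Finsupp.linearCombination ℂ g c ∈ Su Ω) : c = 0 := by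
  refine finsupp_eq_zero_of_sum_mul_pow hψ fun j => ?_
  by_contra hj
  rw [Su, Set.mem_ofPred_eq, Metric.tendstoUniformly_iff] at hc
  obtain ⟨n, ⟨hnj, z, hz⟩, hsmall, hn⟩ := ((hσ j).and_eventually
    ((hc _ (mul_pos (norm_pos_iff.2 hj) hε)).and (eventually_linearCombination_eq hg c))).exists
  have h := hsmall z
  rw [hn, hnj] at h
  simp only [Pi.zero_apply, dist_zero_left, Subalgebra.coe_smul, ContinuousMap.smul_apply,
    norm_smul] at h
  exact absurd h (not_lt.2 (mul_le_mul_of_nonneg_left hz (norm_nonneg _)))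

end Perturbation

theorem exists_perturbed_family {Ω : Set ℂ} (hne : Ω.Nonempty) {x : HSeq Ω} (hx : x ∈ Suc Ω)
    (hxu : x ∉ Su Ω) : ∃ g : Option (ℕ × HSeq Ω × ℕ) → HSeq Ω,
      g none = x ∧ (∀ k F m n, n < m → g (some (k, F, m)) n = F n) ∧ (∀ o, g o ∈ Suc Ω) ∧
      ∀ c, Finsupp.linearCombination ℂ g c ∈ Su Ω → c = 0 := by
  obtain ⟨ε, hε, σ, hσ⟩ := exists_frequently_le_norm hxu
  have hcard : Cardinal.mk (ℕ × HSeq Ω × ℕ) ≤ Cardinal.mk (Set.Ioo (0 : ℝ) 1) := by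
    rw [Cardinal.mk_Ioo_real one_pos]
    simp [-Cardinal.mk_pi, mk_hSeq hne]
  obtain ⟨φ⟩ := hcard
  let ψ : Option (ℕ × HSeq Ω × ℕ) → ℂ := fun o => o.elim 1 fun i => ((φ i : ℝ) : ℂ)
  let g : Option (ℕ × HSeq Ω × ℕ) → HSeq Ω := fun o =>
    o.elim x fun i n => if n < i.2.2 then i.2.1 n else ψ (some i) ^ σ n • x n
  have hψ : Function.Injective ψ := by
    rintro (_ | i) (_ | j) h
    · rfl
    · exact absurd (Complex.ofReal_injective (by simpa [ψ] using h)) (φ j).2.2.ne'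
    · exact absurd (Complex.ofReal_injective (by simpa [ψ] using h)) (φ i).2.2.ne
    · exact congrArg some (φ.injective (Subtype.ext (Complex.ofReal_injective h)))
  have hψ1 : ∀ o, ‖ψ o‖ ≤ 1 := by
    rintro (_ | i)
    · simp [ψ]
    · simpa [ψ, abs_of_pos (φ i).2.1] using (φ i).2.2.le
  have hg : ∀ o, ∀ᶠ n in atTop, g o n = ψ o ^ σ n • x n := by
    rintro (_ | i)
    · simp [g, ψ]
    · filter_upwards [eventually_ge_atTop i.2.2] with n hn
      simp [g, not_lt.2 hn]
  have hgs : ∀ o, g o ∈ Suc Ω := fun o =>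
    mem_Suc_of_eventually_eq_smul hx
      (fun n => by rw [norm_pow]; exact pow_le_one₀ (norm_nonneg _) (hψ1 o)) (hg o)
  have hinj : ∀ c, Finsupp.linearCombination ℂ g c ∈ Su Ω → c = 0 := fun c =>
    eq_zero_of_linearCombination_mem_Su hψ hg hε hσ
  refine ⟨g, rfl, fun k F m n hn => ?_, hgs, hinj⟩
  simp [g, hn]

/-- `S_uc \ S_u` is infinitely pointwise `𝔠`-dense-lineable in `H(Ω)^ℕ`. -/
theorem Suc_diff_Su_infinitely_pointwise_continuum_dense_lineable
    (Ω : Set ℂ) (hΩ : IsOpen Ω) (hne : Ω.Nonempty) :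
    ∀ x ∈ Suc Ω \ Su Ω, ∃ W : ℕ → Submodule ℂ (HSeq Ω),
      (∀ k, Dense (W k : Set (HSeq Ω))) ∧
      (∀ k, Module.rank ℂ (W k) = Cardinal.continuum) ∧
      (∀ k, x ∈ W k) ∧
      (∀ k, (W k : Set (HSeq Ω)) ⊆ (Suc Ω \ Su Ω) ∪ {0}) ∧
      (∀ k n, k ≠ n → W k ⊓ W n = Submodule.span ℂ {x}) := by
  rintro x ⟨hx, hxu⟩
  obtain ⟨g, hgx, hgF, hgs, hinj⟩ := exists_perturbed_family hne hx hxu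
  have hli : LinearIndependent ℂ g :=
    linearIndependent_of_linearCombination_mem (zero_mem_Su Ω) hinj
  let S : ℕ → Set (Option (ℕ × HSeq Ω × ℕ)) := fun k =>
    insert none (Set.range fun p : HSeq Ω × ℕ => some (k, p))
  refine ⟨fun k => Submodule.span ℂ (g '' S k), fun k => ?_, fun k => ?_, fun k => ?_,
    fun k => ?_, fun k n hkn => ?_⟩
  · intro F
    refine mem_closure_of_tendsto (f := fun m => g (some (k, F, m))) (b := atTop) ?_
      (Eventually.of_forall fun m => Submodule.subset_span
        (Set.mem_image_of_mem g (Or.inr ⟨(F, m), rfl⟩)))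
    refine tendsto_pi_nhds.2 fun n => tendsto_const_nhds.congr' ?_
    filter_upwards [eventually_gt_atTop n] with m hm
    exact (hgF k F m n hm).symm
  · apply le_antisymm
    · exact (rank_le_card ℂ _).trans ((Cardinal.mk_set_le _).trans (mk_hSeq hne).le)
    · rw [rank_span_image_of_linearIndependent hli, Cardinal.mk_image_eq hli.injective,
        ← mk_hSeq hne]
      refine Cardinal.mk_le_of_injective
        (f := fun F : HSeq Ω => (⟨some (k, F, 0), Or.inr ⟨(F, 0), rfl⟩⟩ : S k)) ?_
      intro F G h
      simpa using congrArg Subtype.val h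
  · exact Submodule.subset_span ⟨none, Or.inl rfl, hgx⟩
  · intro y hy
    have hys : y ∈ Suc Ω :=
      (Submodule.span_le.2 (Set.image_subset_iff.2 fun o _ => hgs o) :
        Submodule.span ℂ (g '' S k) ≤ sucSubmodule Ω) hy
    obtain ⟨c, -, rfl⟩ := (Finsupp.mem_span_image_iff_linearCombination ℂ).1 hy
    by_cases hc : Finsupp.linearCombination ℂ g c ∈ Su Ω
    · right
      simp [hinj c hc]
    · exact Or.inl ⟨hys, hc⟩
  · have hS : S k ∩ S n = {none} := by
      ext (_ | i)
      · simp [S]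
      · simp only [S, Set.mem_inter_iff, Set.mem_insert_iff, Set.mem_range, Set.mem_singleton_iff,
          reduceCtorEq, false_or, iff_false, Option.some.injEq]
        rintro ⟨⟨p, rfl⟩, q, hq⟩
        exact hkn (congrArg Prod.fst hq).symm
    have hx' : ({x} : Set (HSeq Ω)) = g '' {none} := by rw [Set.image_singleton, hgx]
    rw [hx', ← hS]
    exact span_image_inf_span_image_of_linearIndependent hli _ _
end

section
/- Let Ω be a nonempty open subset of ℂ and let f = (f_n) ∈ H(Ω)^ℕ. Suppose there exist m ∈ ℕ, a connected component Ω_i of Ω, and a closed infinite-dimensional vector subspace X_i of H(Ω_i) not containing the constant function 1, such that f_m is not identically zero on Ω_i. Set X = {λ + ψ ∈ H(Ω) : λ ∈ ℂ, the restriction of ψ to Ω_i belongs to X_i, and ψ is identically 0 on every connected component of Ω other than Ω_i}, and M(f) = {(f_n·φ)_{n∈ℕ} : φ ∈ X}. Then M(f) is a closed infinite-dimensional vector subspace of H(Ω)^ℕ that contains f. -/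
open Filter Topology

set_option synthInstance.maxHeartbeats 1000000
set_option maxHeartbeats 1000000

instance ContinuousMap.isUniformAddGroup_compactConvergence {α G : Type*} [TopologicalSpace α]
    [UniformSpace G] [AddGroup G] [IsUniformAddGroup G] : IsUniformAddGroup C(α, G) where
  uniformContinuous_sub := by
    have h := (ContinuousMap.isUniformEmbedding_toUniformOnFunIsCompact
      (α := α) (β := G)).isUniformInducing
    rw [h.uniformContinuous_iff]
    exact uniformContinuous_sub.comp (h.uniformContinuous.prodMap h.uniformContinuous)

namespace Hol

variable {U V : Set ℂ}

theorem continuous_eval (z : U) : Continuous fun φ : Hol U => (φ : C(U, ℂ)) z :=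
  (continuous_eval_const (F := C(U, ℂ)) z).comp continuous_subtype_val

instance : IsUniformAddGroup (Hol U) :=
  IsUniformInducing.isUniformAddGroup (Hol U).toSubmodule.subtype
    isUniformEmbedding_subtype_val.isUniformInducing

theorem isClosed (hU : IsOpen U) : IsClosed (Hol U : Set C(U, ℂ)) := by
  have := hU.locallyCompactSpace
  refine isClosed_iff_forall_filter.2 fun φ F hF hFle hφ => ?_
  classical
  let E : C(U, ℂ) → ℂ → ℂ := fun ψ z => if h : z ∈ U then ψ ⟨z, h⟩ else 0
  have hE : ∀ (ψ : C(U, ℂ)) (z : U), ψ z = E ψ z := fun ψ z => by simp [E]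
  refine ⟨E φ, ?_, hE φ⟩
  have hlim : TendstoLocallyUniformlyOn E (E φ) F U := by
    rw [tendstoLocallyUniformlyOn_iff_tendstoLocallyUniformly_comp_coe]
    have h := ContinuousMap.tendsto_iff_tendstoLocallyUniformly.1 (tendsto_id'.2 hφ)
    simp only [Function.comp_def, ← hE]
    exact h
  refine hlim.differentiableOn ?_ hU
  filter_upwards [le_principal_iff.1 hFle] with ψ ⟨g, hg, hψ⟩
  exact hg.congr fun z hz => (hE ψ ⟨z, hz⟩).symm.trans (hψ ⟨z, hz⟩)

theorem completeSpace (hU : IsOpen U) : CompleteSpace (Hol U) := by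
  have := hU.locallyCompactSpace
  exact (isClosed hU).completeSpace_coe

theorem eventually_ne_zero (hU : IsOpen U) (hc : IsPreconnected U) {f : Hol U} (hf : f ≠ 0)
    {g : ℂ → ℂ} (hg : DifferentiableOn ℂ g U) (hfg : ∀ z : U, (f : C(U, ℂ)) z = g z)
    {z : ℂ} (hz : z ∈ U) : ∀ᶠ y in 𝓝[≠] z, g y ≠ 0 := by
  by_contra h
  refine hf (Subtype.ext (ContinuousMap.ext fun y => (hfg y).trans ?_))
  exact (hg.analyticOnNhd hU).eqOn_zero_of_preconnected_of_frequently_eq_zero hc hz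
    h y.2

theorem eq_zero_of_mul_eq_zero (hU : IsOpen U) (hc : IsPreconnected U) {f : Hol U}
    (hf : f ≠ 0) {φ : Hol U} (h : f * φ = 0) : φ = 0 := by
  obtain ⟨g, hg, hfg⟩ := f.2
  by_contra hφ
  obtain ⟨k, hk, hφk⟩ := φ.2
  obtain ⟨z, hz⟩ : U.Nonempty := by
    by_contra hU
    rw [Set.not_nonempty_iff_eq_empty] at hU
    subst hU
    exact hf (Subtype.ext (ContinuousMap.ext fun y => y.2.elim))
  obtain ⟨y, ⟨hy₁, hy₂⟩, hy⟩ := (((eventually_ne_zero hU hc hf hg hfg hz).and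
    (eventually_ne_zero hU hc hφ hk hφk hz)).and
      (mem_nhdsWithin_of_mem_nhds (hU.mem_nhds hz))).exists
  have := DFunLike.congr_fun (congrArg Subtype.val h) ⟨y, hy⟩
  simp [hfg, hφk, hy₁, hy₂] at this

theorem norm_le_of_sphere {z : ℂ} {r C : ℝ} (hr : 0 < r) (hzr : Metric.closedBall z r ⊆ U)
    (φ : Hol U) (h : ∀ y : U, (y : ℂ) ∈ Metric.sphere z r → ‖(φ : C(U, ℂ)) y‖ ≤ C)
    (y : U) (hy : (y : ℂ) ∈ Metric.closedBall z r) : ‖(φ : C(U, ℂ)) y‖ ≤ C := by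
  obtain ⟨g, hg, hφ⟩ := φ.2
  rw [hφ]
  refine Complex.norm_le_of_forall_mem_frontier_norm_le (U := Metric.ball z r)
    Metric.isBounded_ball ?_ (fun x hx => ?_) (by rwa [closure_ball z hr.ne'])
  · refine DifferentiableOn.diffContOnCl ?_
    rw [closure_ball z hr.ne']
    exact hg.mono hzr
  · rw [frontier_ball z hr.ne'] at hx
    have hxU := hzr (Metric.sphere_subset_closedBall hx)
    simpa [hφ] using h ⟨x, hxU⟩ hx

theorem isInducing_mulLeft (hU : IsOpen U) (hc : IsPreconnected U) {f : Hol U} (hf : f ≠ 0) :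
    IsInducing (LinearMap.mulLeft ℂ f) := by
  have := hU.locallyCompactSpace
  rw [IsTopologicalAddGroup.isInducing_iff_nhds_zero]
  refine le_antisymm ?_ ?_
  · rw [← map_le_iff_le_comap]
    have hcont : Continuous (LinearMap.mulLeft ℂ f) := continuous_const.mul continuous_id
    exact (hcont.tendsto 0).trans_eq (congrArg 𝓝 (map_zero (LinearMap.mulLeft ℂ f)))
  set F := comap (LinearMap.mulLeft ℂ f) (𝓝 0) with hF
  have hlim : Tendsto (fun φ : Hol U => ((f * φ : Hol U) : C(U, ℂ))) F (𝓝 0) :=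
    (continuous_subtype_val.tendsto (0 : Hol U)).comp (tendsto_comap (f := LinearMap.mulLeft ℂ f))
  rw [ContinuousMap.tendsto_iff_forall_isCompact_tendstoUniformlyOn] at hlim
  rw [nhds_subtype_eq_comap, ← tendsto_iff_comap]
  refine ContinuousMap.tendsto_iff_tendstoLocallyUniformly.2 ?_
  rw [Metric.tendstoLocallyUniformly_iff]
  intro ε hε z
  obtain ⟨g, hg, hfg⟩ := f.2
  have hne := eventually_ne_zero hU hc hf hg hfg z.2
  rw [eventually_nhdsWithin_iff] at hne
  obtain ⟨r, hr, hball⟩ := Metric.nhds_basis_closedBall.mem_iff.1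
    (inter_mem hne (hU.mem_nhds z.2))
  have hsU : Metric.sphere (z : ℂ) r ⊆ U := fun y hy =>
    (hball (Metric.sphere_subset_closedBall hy)).2
  have hs0 : ∀ y ∈ Metric.sphere (z : ℂ) r, g y ≠ 0 := fun y hy =>
    (hball (Metric.sphere_subset_closedBall hy)).1 (Metric.ne_of_mem_sphere hy hr.ne')
  obtain ⟨x, hx, hmin⟩ := (isCompact_sphere (z : ℂ) r).exists_isMinOn
    (NormedSpace.sphere_nonempty.2 hr.le) ((hg.mono hsU).continuousOn.norm)
  have hδ : 0 < ‖g x‖ := norm_pos_iff.2 (hs0 x hx)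
  have hK : IsCompact ((↑) ⁻¹' Metric.sphere (z : ℂ) r : Set U) :=
    Topology.IsInducing.subtypeVal.isCompact_preimage_iff (by simpa using hsU) |>.2
      (isCompact_sphere _ _)
  refine ⟨(↑) ⁻¹' Metric.closedBall (z : ℂ) r,
    continuous_subtype_val.continuousAt.preimage_mem_nhds (Metric.closedBall_mem_nhds _ hr), ?_⟩
  filter_upwards [Metric.tendstoUniformlyOn_iff.1 (hlim _ hK) (‖g x‖ * (ε / 2)) (by positivity)]
    with φ hφ y hy
  have hle := norm_le_of_sphere (C := ε / 2) hr (fun y hy => (hball hy).2) φ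
    (fun y hy => ?_) y hy
  · simp only [ZeroMemClass.coe_zero, ContinuousMap.zero_apply, dist_zero_left]
    linarith
  · have h₁ := hφ y hy
    simp only [MulMemClass.coe_mul, ContinuousMap.zero_apply, ContinuousMap.mul_apply,
      dist_zero_left, norm_mul, hfg] at h₁
    have h₂ : ‖g x‖ ≤ ‖g y‖ := hmin hy
    refine le_of_mul_le_mul_left ?_ hδ
    exact (mul_le_mul_of_nonneg_right h₂ (norm_nonneg _)).trans h₁.le

theorem isClosedEmbedding_mulLeft (hU : IsOpen U) (hc : IsPreconnected U) {f : Hol U}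
    (hf : f ≠ 0) : IsClosedEmbedding (LinearMap.mulLeft ℂ f) := by
  have := completeSpace hU
  refine IsUniformEmbedding.isClosedEmbedding
    ⟨AddMonoidHom.isUniformInducing_of_isInducing (isInducing_mulLeft hU hc hf), ?_⟩
  exact (injective_iff_map_eq_zero _).2 fun φ => eq_zero_of_mul_eq_zero hU hc hf

/-- Extension by zero of a holomorphic function from an open set `U` to a set `V` in which `U` is
relatively clopen. -/
noncomputable def extendZero (hU : IsOpen U) (hVU : IsOpen (V \ U)) : Hol U →ₗ[ℂ] Hol V := by
  classical
  have key (φ : Hol U) : ∃ g : ℂ → ℂ, DifferentiableOn ℂ g V ∧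
      ∀ z : V, (if h : (z : ℂ) ∈ U then (φ : C(U, ℂ)) ⟨z, h⟩ else 0) = g z := by
    obtain ⟨g, hg, hφ⟩ := φ.2
    refine ⟨U.indicator g, fun z hz => DifferentiableAt.differentiableWithinAt ?_, fun z => ?_⟩
    · by_cases h : z ∈ U
      · refine (hg.differentiableAt (hU.mem_nhds h)).congr_of_eventuallyEq ?_
        filter_upwards [hU.mem_nhds h] with y hy using Set.indicator_of_mem hy g
      · refine (differentiableAt_const 0).congr_of_eventuallyEq ?_
        filter_upwards [hVU.mem_nhds ⟨hz, h⟩] with y hy using Set.indicator_of_notMem hy.2 g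
    · by_cases h : (z : ℂ) ∈ U <;> simp [h, hφ]
  refine
    { toFun := fun φ => ⟨⟨fun z => if h : (z : ℂ) ∈ U then (φ : C(U, ℂ)) ⟨z, h⟩ else 0, ?_⟩, key φ⟩
      map_add' := fun φ ψ => ?_
      map_smul' := fun c φ => ?_ }
  · obtain ⟨g, hg, hφ⟩ := key φ
    simp only [hφ]
    exact hg.continuousOn.domRestrict
  · ext z
    by_cases h : (z : ℂ) ∈ U <;> simp [h]
  · ext z
    by_cases h : (z : ℂ) ∈ U <;> simp [h]

theorem extendZero_of_mem (hU : IsOpen U) (hVU : IsOpen (V \ U)) (φ : Hol U) (z : V)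
    (h : (z : ℂ) ∈ U) : (extendZero hU hVU φ : C(V, ℂ)) z = (φ : C(U, ℂ)) ⟨z, h⟩ := by
  simp [extendZero, h]

theorem extendZero_of_notMem (hU : IsOpen U) (hVU : IsOpen (V \ U)) (φ : Hol U) (z : V)
    (h : (z : ℂ) ∉ U) : (extendZero hU hVU φ : C(V, ℂ)) z = 0 := by
  simp [extendZero, h]

theorem continuous_holRestrict (h : U ⊆ V) : Continuous (holRestrict h) :=
  ((ContinuousMap.continuous_precomp ⟨Set.inclusion h, continuous_inclusion h⟩).comp
    continuous_subtype_val).subtype_mk _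

theorem isOpen_diff_connectedComponentIn (hV : IsOpen V) (w : ℂ) :
    IsOpen (V \ connectedComponentIn V w) := by
  refine isOpen_iff_mem_nhds.2 fun z hz => ?_
  filter_upwards [hV.connectedComponentIn.mem_nhds (mem_connectedComponentIn hz.1)] with y hy
  refine ⟨connectedComponentIn_subset _ _ hy, fun hyw => hz.2 ?_⟩
  rw [connectedComponentIn_eq hyw, ← connectedComponentIn_eq hy]
  exact mem_connectedComponentIn hz.1

/-- If `c • v + x` converges with `x` in a closed subspace not containing `v`, then `c` converges
and the remaining part of the limit lies in the subspace. -/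
theorem _root_.Submodule.exists_tendsto_of_tendsto_smul_add {𝕜 E ι : Type*}
    [NontriviallyNormedField 𝕜] [CompleteSpace 𝕜] [AddCommGroup E] [Module 𝕜 E]
    [TopologicalSpace E] [IsTopologicalAddGroup E] [ContinuousSMul 𝕜 E]
    (X : Submodule 𝕜 E) (hX : IsClosed (X : Set E)) {v : E} (hv : v ∉ X) {F : Filter ι} [F.NeBot]
    {c : ι → 𝕜} {x : ι → X} {y : E} (h : Tendsto (fun i => c i • v + x i) F (𝓝 y)) :
    ∃ (a : 𝕜) (b : X), Tendsto c F (𝓝 a) ∧ Tendsto x F (𝓝 b) ∧ y = a • v + b := by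
  have : IsClosed (X : Set E) := hX
  have hq : X.mkQ v ≠ 0 := by simpa using hv
  have hemb := isClosedEmbedding_smul_left (𝕜 := 𝕜) hq
  have hlim : Tendsto (fun i => c i • X.mkQ v) F (𝓝 (X.mkQ y)) := by
    have h' := (X.isOpenQuotientMap_mkQ.continuous.tendsto y).comp h
    refine h'.congr fun i => ?_
    simp
  obtain ⟨a, ha⟩ : X.mkQ y ∈ Set.range fun a : 𝕜 => a • X.mkQ v :=
    hemb.isClosed_range.mem_of_tendsto hlim (Eventually.of_forall fun i => ⟨c i, rfl⟩)
  have hb : y - a • v ∈ X := by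
    rw [← Submodule.Quotient.mk_eq_zero, ← Submodule.mkQ_apply, map_sub, map_smul]
    exact sub_eq_zero.2 ha.symm
  have hca : Tendsto c F (𝓝 a) := by
    rw [hemb.isInducing.tendsto_nhds_iff]
    simpa only [Function.comp_def, ha] using hlim
  refine ⟨a, ⟨_, hb⟩, hca, ?_, by simp⟩
  rw [tendsto_subtype_rng]
  refine (h.sub (hca.smul_const v)).congr fun i => by simp


theorem exists_tendsto_of_tendsto_smul_one_add {X : Submodule ℂ (Hol U)}
    (hX : IsClosed (X : Set (Hol U))) (hv : (1 : Hol U) ∉ X) {F : Filter (ℂ × X)} [F.NeBot]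
    {y : Hol U} (h : Tendsto (fun p : ℂ × X => p.1 • (1 : Hol U) + (p.2 : Hol U)) F (𝓝 y)) :
    ∃ (a : ℂ) (b : X), Tendsto Prod.fst F (𝓝 a) ∧ Tendsto Prod.snd F (𝓝 b) := by
  have key := X.exists_tendsto_of_tendsto_smul_add hX hv (F := F) (c := Prod.fst) (x := Prod.snd)
    (y := y)
  obtain ⟨a, b, ha, hb, -⟩ := key h
  exact ⟨a, b, ha, hb⟩

theorem _root_.Submodule.finite_of_finite_range_prod {𝕜 E F : Type*} [Field 𝕜] [AddCommGroup E]
    [Module 𝕜 E] [AddCommGroup F] [Module 𝕜 F] {X : Submodule 𝕜 E} (T : 𝕜 × X →ₗ[𝕜] F)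
    (hT : ∀ x : X, T (0, x) = 0 → x = 0) (h : Module.Finite 𝕜 (LinearMap.range T)) :
    Module.Finite 𝕜 X :=
  Module.Finite.of_injective (T.rangeRestrict ∘ₗ LinearMap.inr 𝕜 𝕜 X)
    ((injective_iff_map_eq_zero _).2 fun x hx => hT x (congrArg Subtype.val hx))

theorem finite_of_finite_range {X : Submodule ℂ (Hol U)} (T : ℂ × X →ₗ[ℂ] HSeq V)
    (hT : ∀ x : X, T (0, x) = 0 → x = 0) (h : Module.Finite ℂ (LinearMap.range T)) :
    Module.Finite ℂ X := by
  have key := Submodule.finite_of_finite_range_prod (𝕜 := ℂ) (E := Hol U) (F := HSeq V)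
    (X := X) T hT
  exact key h

end Hol

/-- If `Ω_i` is a connected component of `Ω`, `X_i` is a closed
infinite-dimensional subspace of `H(Ω_i)` not containing the constant function `1`, and
`f_m` is not identically zero on `Ω_i`, then, for
`X = {λ + ψ : λ ∈ ℂ, ψ|_{Ω_i} ∈ X_i, ψ ≡ 0 on the other components}`,
the set `M(f) = {(f_n·φ)_n : φ ∈ X}` is a closed infinite-dimensional vector subspace of
`H(Ω)^ℕ` containing `f`. -/
theorem Mf_closed_infinite_dimensional_of_component
    (Ω : Set ℂ) (hΩ : IsOpen Ω) (hne : Ω.Nonempty)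
    (f : HSeq Ω) (m : ℕ) (w : ℂ) (hw : w ∈ Ω)
    (Ωi : Set ℂ) (hΩi : Ωi = connectedComponentIn Ω w) (hsub : Ωi ⊆ Ω)
    (Xi : Submodule ℂ (Hol Ωi))
    (hXiclosed : IsClosed (Xi : Set (Hol Ωi)))
    (hXiinf : ¬ Module.Finite ℂ Xi)
    (hone : (1 : Hol Ωi) ∉ Xi)
    (hfm : holRestrict hsub (f m) ≠ 0) :
    ∃ M : Submodule ℂ (HSeq Ω),
      (M : Set (HSeq Ω)) =
        {G | ∃ φ : Hol Ω,
          (∃ (lam : ℂ) (ψ : Hol Ω),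
            φ = algebraMap ℂ (Hol Ω) lam + ψ ∧
            holRestrict hsub ψ ∈ Xi ∧
            ∀ z : Ω, (z : ℂ) ∉ Ωi → (ψ : C(Ω, ℂ)) z = 0) ∧
          ∀ n, G n = f n * φ} ∧
      IsClosed (M : Set (HSeq Ω)) ∧ ¬ Module.Finite ℂ M ∧ f ∈ M := by
  have hUo : IsOpen Ωi := hΩi ▸ hΩ.connectedComponentIn
  have hVU : IsOpen (Ω \ Ωi) := hΩi ▸ Hol.isOpen_diff_connectedComponentIn hΩ w
  have hc : IsPreconnected Ωi := hΩi ▸ isPreconnected_connectedComponentIn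
  let ext : Hol Ωi →ₗ[ℂ] Hol Ω := Hol.extendZero hUo hVU
  have hres (φ : Hol Ωi) : holRestrict hsub (ext φ) = φ :=
    Subtype.ext (ContinuousMap.ext fun z => Hol.extendZero_of_mem hUo hVU φ ⟨z, hsub z.2⟩ z.2)
  let P : ℂ × Xi →ₗ[ℂ] Hol Ω :=
    (Algebra.linearMap ℂ (Hol Ω)).coprod (ext ∘ₗ Xi.subtype)
  have hP (p : ℂ × Xi) : P p = algebraMap ℂ (Hol Ω) p.1 + ext p.2 := rfl
  let T : ℂ × Xi →ₗ[ℂ] HSeq Ω := LinearMap.pi fun n => LinearMap.mulLeft ℂ (f n) ∘ₗ P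
  have hT (p : ℂ × Xi) (n : ℕ) : T p n = f n * P p := rfl
  have hTm (p : ℂ × Xi) : holRestrict hsub (T p m) =
      LinearMap.mulLeft ℂ (holRestrict hsub (f m)) (p.1 • 1 + (p.2 : Hol Ωi)) := by
    have h : holRestrict hsub (P p) = p.1 • 1 + (p.2 : Hol Ωi) := by
      conv_rhs => rw [← hres p.2]
      refine Subtype.ext (ContinuousMap.ext fun z => ?_)
      change p.1 + _ = p.1 * 1 + _
      rw [mul_one]
      rfl
    rw [← h]
    rfl
  have hval (p : ℂ × Xi) (n : ℕ) (z : Ω) : (T p n : C(Ω, ℂ)) z =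
      (f n : C(Ω, ℂ)) z * (p.1 + (ext p.2 : C(Ω, ℂ)) z) := rfl
  have hext_mem (φ : Hol Ωi) (z : Ω) (hz : (z : ℂ) ∈ Ωi) :
      (ext φ : C(Ω, ℂ)) z = (φ : C(Ωi, ℂ)) ⟨z, hz⟩ := Hol.extendZero_of_mem hUo hVU φ z hz
  have hext_notMem (φ : Hol Ωi) (z : Ω) (hz : (z : ℂ) ∉ Ωi) : (ext φ : C(Ω, ℂ)) z = 0 :=
    Hol.extendZero_of_notMem hUo hVU φ z hz
  clear_value T P ext
  have hemb := Hol.isClosedEmbedding_mulLeft hUo hc hfm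
  refine ⟨LinearMap.range T, ?_, ?_, ?_, ?_⟩
  · ext G
    constructor
    · rintro ⟨p, rfl⟩
      refine ⟨P p, ⟨p.1, ext p.2, hP p, ?_, fun z hz => ?_⟩, hT p⟩
      · rw [hres]
        exact p.2.2
      · exact hext_notMem _ z hz
    · rintro ⟨_, ⟨lam, ψ, rfl, hψ, hψ₀⟩, hG⟩
      refine ⟨(lam, ⟨_, hψ⟩), funext fun n => ?_⟩
      have hext : ext (holRestrict hsub ψ) = ψ := by
        refine Subtype.ext (ContinuousMap.ext fun z => ?_)
        by_cases hz : (z : ℂ) ∈ Ωi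
        · exact hext_mem _ z hz
        · exact (hext_notMem _ z hz).trans (hψ₀ z hz).symm
      rw [hT, hP, hG, hext]
  · refine isClosed_of_closure_subset fun G hG => ?_
    have hne : (comap T (𝓝 G)).NeBot :=
      comap_neBot_iff.2 fun t ht => by
        obtain ⟨_, h, p, rfl⟩ := mem_closure_iff_nhds.1 hG t ht
        exact ⟨p, h⟩
    have hlim : Tendsto T (comap T (𝓝 G)) (𝓝 G) := tendsto_comap
    have hlim_m := (((Hol.continuous_holRestrict hsub).comp (continuous_apply m)).tendsto G).comp
      hlim
    simp only [Function.comp_def, hTm] at hlim_m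
    obtain ⟨y, hy⟩ := hemb.isClosed_range.mem_of_tendsto hlim_m
      (Eventually.of_forall fun p => ⟨_, rfl⟩)
    rw [← hy] at hlim_m
    have hlim_Xi : Tendsto (fun p : ℂ × Xi => p.1 • (1 : Hol Ωi) + (p.2 : Hol Ωi))
        (comap T (𝓝 G)) (𝓝 y) := by
      rw [hemb.isInducing.tendsto_nhds_iff]
      exact hlim_m
    obtain ⟨a, b, ha, hb⟩ :=
      Hol.exists_tendsto_of_tendsto_smul_one_add hXiclosed hone hlim_Xi
    refine ⟨(a, b), funext fun n => Subtype.ext (ContinuousMap.ext fun z => ?_)⟩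
    have h₁ := (((Hol.continuous_eval z).comp (continuous_apply n)).tendsto G).comp hlim
    refine tendsto_nhds_unique ?_ h₁
    simp only [Function.comp_def, hval]
    refine tendsto_const_nhds.mul (ha.add ?_)
    by_cases hz : (z : ℂ) ∈ Ωi
    · simp only [hext_mem _ z hz]
      exact (((Hol.continuous_eval _).comp continuous_subtype_val).tendsto b).comp hb
    · simp only [hext_notMem _ z hz]
      exact tendsto_const_nhds
  · intro hfin
    have h_inr (x : Xi) (h₀ : T (0, x) = 0) : x = 0 := by
      have h₁ := hTm (0, x)
      rw [h₀, zero_smul, zero_add] at h₁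
      have h₂ : LinearMap.mulLeft ℂ (holRestrict hsub (f m)) (x : Hol Ωi) = 0 := h₁.symm
      exact Subtype.ext (hemb.injective (h₂.trans (map_zero _).symm))
    exact hXiinf (Hol.finite_of_finite_range T h_inr hfin)
  · refine ⟨(1, 0), funext fun n => ?_⟩
    rw [hT, hP]
    simp
end

section
/- Let Ω be a nonempty open subset of ℂ and let f = (f_n) ∈ H(Ω)^ℕ. Suppose there is a countably infinite family {S_k : k ∈ ℕ} of pairwise disjoint nonempty open subsets of Ω with Ω = ⋃_{k∈ℕ} S_k, such that for each k ∈ ℕ there exists m(k) ∈ ℕ with f_{m(k)} not identically zero on S_k. Set X = {∑_{k=1}^∞ c_k·χ_{S_k} : c_k ∈ ℂ for each k ∈ ℕ} (the functions on Ω that are constant on each S_k; each such function is holomorphic on Ω), and M(f) = {(f_n·φ)_{n∈ℕ} : φ ∈ X}. Then M(f) is a closed infinite-dimensional vector subspace of H(Ω)^ℕ that contains f. -/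
open Filter Topology

set_option synthInstance.maxHeartbeats 1000000
set_option maxHeartbeats 1000000

noncomputable section

/-- The holomorphic function on `Ω` taking the constant value `c k` on the fibre over `k` of a
locally constant map `ι : Ω → ℕ`. -/
def stepHol {Ω : Set ℂ} (hΩ : IsOpen Ω) (ι : LocallyConstant Ω ℕ) (c : ℕ → ℂ) : Hol Ω := by
  classical
  refine ⟨⟨fun z => c (ι z), (ι.map c).continuous⟩,
    fun z => if h : z ∈ Ω then c (ι ⟨z, h⟩) else 0, fun z hz => ?_, fun z => ?_⟩
  · have hev : ∀ᶠ w in 𝓝 z, (if h : w ∈ Ω then c (ι ⟨w, h⟩) else 0) = c (ι ⟨z, hz⟩) := by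
      have hloc := ι.isLocallyConstant.eventually_eq ⟨z, hz⟩
      have hmap := hΩ.isOpenEmbedding_subtypeVal.map_nhds_eq ⟨z, hz⟩
      rw [← hmap, eventually_map]
      filter_upwards [hloc] with w hw
      simpa using congrArg c hw
    exact ((differentiableAt_const _).congr_of_eventuallyEq hev).differentiableWithinAt
  · change c (ι z) = dite _ _ _
    rw [dif_pos z.2]

@[simp]
theorem stepHol_apply {Ω : Set ℂ} (hΩ : IsOpen Ω) (ι : LocallyConstant Ω ℕ) (c : ℕ → ℂ) (z : Ω) :
    (stepHol hΩ ι c : C(Ω, ℂ)) z = c (ι z) := rfl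

theorem Hol.ext_apply {Ω : Set ℂ} {g h : Hol Ω}
    (H : ∀ z : Ω, (g : C(Ω, ℂ)) z = (h : C(Ω, ℂ)) z) : g = h :=
  Subtype.ext (ContinuousMap.ext H)

/-- The linear map sending `c` to the sequence `f` multiplied by the step function with
values `c`. -/
def stepMul {Ω : Set ℂ} (hΩ : IsOpen Ω) (ι : LocallyConstant Ω ℕ) (f : HSeq Ω) :
    (ℕ → ℂ) →ₗ[ℂ] HSeq Ω where
  toFun c n := f n * stepHol hΩ ι c
  map_add' c d := by
    funext n
    apply Hol.ext_apply
    intro z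
    simp [mul_add]
  map_smul' a c := by
    funext n
    apply Hol.ext_apply
    intro z
    simp [mul_left_comm]

theorem stepMul_apply {Ω : Set ℂ} (hΩ : IsOpen Ω) (ι : LocallyConstant Ω ℕ) (f : HSeq Ω)
    (c : ℕ → ℂ) (n : ℕ) (z : Ω) :
    (stepMul hΩ ι f c n : C(Ω, ℂ)) z = (f n : C(Ω, ℂ)) z * c (ι z) := rfl

theorem continuous_hSeq_apply {Ω : Set ℂ} (n : ℕ) (z : Ω) :
    Continuous fun G : HSeq Ω => (G n : C(Ω, ℂ)) z :=
  (ContinuousEvalConst.continuous_eval_const z).comp (continuous_subtype_val.comp (continuous_apply n))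

theorem isClosed_range_stepMul {Ω : Set ℂ} (hΩ : IsOpen Ω) (ι : LocallyConstant Ω ℕ)
    (f : HSeq Ω) (m : ℕ → ℕ) (p : ℕ → Ω) (hp : ∀ k, ι (p k) = k)
    (hf : ∀ k, (f (m k) : C(Ω, ℂ)) (p k) ≠ 0) :
    IsClosed (LinearMap.range (stepMul hΩ ι f) : Set (HSeq Ω)) := by
  have heq : (LinearMap.range (stepMul hΩ ι f) : Set (HSeq Ω)) =
      ⋂ (n : ℕ) (z : Ω), {G : HSeq Ω |
        (G n : C(Ω, ℂ)) z * (f (m (ι z)) : C(Ω, ℂ)) (p (ι z)) =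
          (f n : C(Ω, ℂ)) z * (G (m (ι z)) : C(Ω, ℂ)) (p (ι z))} := by
    ext G
    simp only [SetLike.mem_coe, LinearMap.mem_range, Set.mem_iInter, Set.mem_ofPred_eq]
    constructor
    · rintro ⟨c, rfl⟩ n z
      simp only [stepMul_apply, hp]
      ring
    · intro hG
      refine ⟨fun k => (G (m k) : C(Ω, ℂ)) (p k) / (f (m k) : C(Ω, ℂ)) (p k), ?_⟩
      funext n
      apply Hol.ext_apply
      intro z
      rw [stepMul_apply, ← mul_div_assoc, ← hG n z, mul_div_cancel_right₀ _ (hf _)]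
  rw [heq]
  exact isClosed_iInter fun n => isClosed_iInter fun z =>
    isClosed_eq ((continuous_hSeq_apply n z).mul continuous_const)
      (continuous_const.mul (continuous_hSeq_apply _ _))

theorem stepMul_injective {Ω : Set ℂ} (hΩ : IsOpen Ω) (ι : LocallyConstant Ω ℕ)
    (f : HSeq Ω) (m : ℕ → ℕ) (p : ℕ → Ω) (hp : ∀ k, ι (p k) = k)
    (hf : ∀ k, (f (m k) : C(Ω, ℂ)) (p k) ≠ 0) :
    Function.Injective (stepMul hΩ ι f) := by
  intro c d hcd
  funext k
  have h := congrArg (fun G : HSeq Ω => (G (m k) : C(Ω, ℂ)) (p k)) hcd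
  simp only [stepMul_apply, hp] at h
  exact mul_left_cancel₀ (hf k) h

theorem not_finite_nat_pi : ¬ Module.Finite ℂ (ℕ → ℂ) := fun _ =>
  not_finite_iff_infinite.mpr (inferInstance : Infinite ℕ)
    (Pi.linearIndependent_single_one ℕ ℂ).finite

/-- The index map of a partition into open pieces, as a locally constant map. -/
theorem exists_locallyConstant_index {Ω : Set ℂ} {S : ℕ → Set ℂ} (hSopen : ∀ k, IsOpen (S k))
    (hSdisj : ∀ j k, j ≠ k → Disjoint (S j) (S k)) (hScover : Ω = ⋃ k, S k) :
    ∃ ι : LocallyConstant Ω ℕ, ∀ (z : Ω) k, (z : ℂ) ∈ S k ↔ ι z = k := by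
  have hex : ∀ z : Ω, ∃ k, (z : ℂ) ∈ S k := fun z => Set.mem_iUnion.mp (hScover ▸ z.2)
  choose i hi using hex
  have hiff : ∀ (z : Ω) k, (z : ℂ) ∈ S k ↔ i z = k := by
    refine fun z k => ⟨fun hz => ?_, fun h => h ▸ hi z⟩
    by_contra hne
    exact Set.disjoint_left.mp (hSdisj _ _ hne) (hi z) hz
  refine ⟨⟨i, (IsLocallyConstant.iff_exists_open i).mpr fun z => ?_⟩, hiff⟩
  exact ⟨Subtype.val ⁻¹' S (i z), (hSopen _).preimage continuous_subtype_val, hi z,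
    fun w hw => (hiff w _).mp hw⟩

end

/-- If `Ω` is partitioned into countably many pairwise disjoint nonempty
open sets `S_k`, on each of which some `f_{m(k)}` is not identically zero, then, for
`X` the set of holomorphic functions on `Ω` that are constant on each `S_k`,
the set `M(f) = {(f_n·φ)_n : φ ∈ X}` is a closed infinite-dimensional vector subspace of
`H(Ω)^ℕ` containing `f`. -/
theorem Mf_closed_infinite_dimensional_of_partition
    (Ω : Set ℂ) (hΩ : IsOpen Ω) (hne : Ω.Nonempty)
    (f : HSeq Ω)
    (S : ℕ → Set ℂ)
    (hSopen : ∀ k, IsOpen (S k))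
    (hSne : ∀ k, (S k).Nonempty)
    (hSdisj : ∀ j k, j ≠ k → Disjoint (S j) (S k))
    (hScover : Ω = ⋃ k, S k)
    (hfm : ∀ k, ∃ m : ℕ, ∃ z : Ω, (z : ℂ) ∈ S k ∧ (f m : C(Ω, ℂ)) z ≠ 0) :
    ∃ M : Submodule ℂ (HSeq Ω),
      (M : Set (HSeq Ω)) =
        {G | ∃ φ : Hol Ω,
          (∀ k, ∃ c : ℂ, ∀ z : Ω, (z : ℂ) ∈ S k → (φ : C(Ω, ℂ)) z = c) ∧
          ∀ n, G n = f n * φ} ∧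
      IsClosed (M : Set (HSeq Ω)) ∧ ¬ Module.Finite ℂ M ∧ f ∈ M := by
  obtain ⟨ι, hι⟩ := exists_locallyConstant_index hSopen hSdisj hScover
  choose m p hpS hf using hfm
  have hp : ∀ k, ι (p k) = k := fun k => (hι _ _).mp (hpS k)
  refine ⟨LinearMap.range (stepMul hΩ ι f), ?_, isClosed_range_stepMul hΩ ι f m p hp hf, ?_, ?_⟩
  · ext G
    constructor
    · rintro ⟨c, rfl⟩
      refine ⟨stepHol hΩ ι c, fun k => ⟨c k, fun z hz => ?_⟩, fun n => rfl⟩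
      rw [stepHol_apply, (hι z k).mp hz]
    · rintro ⟨φ, hφ, hG⟩
      choose c hc using hφ
      refine ⟨c, funext fun n => ?_⟩
      rw [hG n]
      apply Hol.ext_apply
      intro z
      rw [stepMul_apply, ← hc (ι z) z ((hι z _).mpr rfl)]
      rfl
  · intro hfin
    exact not_finite_nat_pi (Module.Finite.equiv
      (LinearEquiv.ofInjective _ (stepMul_injective hΩ ι f m p hp hf)).symm)
  · refine ⟨fun _ => 1, funext fun n => ?_⟩
    apply Hol.ext_apply
    intro z
    rw [stepMul_apply, mul_one]
end

section
/- Let Ω be a nonempty open subset of ℂ. Then the set S_p \ S_uc is pointwise spaceable in H(Ω)^ℕ: for every f ∈ S_p \ S_uc there exists a closed infinite-dimensional vector subspace M of H(Ω)^ℕ such that f ∈ M and M \ {0} ⊆ S_p \ S_uc. -/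
open Filter Topology

set_option synthInstance.maxHeartbeats 1000000
set_option maxHeartbeats 1000000

/-- A predicate on `ℕ` holding infinitely often holds infinitely often on each block of a suitable
partition of `ℕ` into infinitely many blocks. -/
lemma exists_partition_frequently {P : ℕ → Prop} (hP : ∃ᶠ n in atTop, P n) :
    ∃ j : ℕ → ℕ, ∀ i, ∃ᶠ n in atTop, j n = i ∧ P n := by
  classical
  have hinf : {n | P n}.Infinite := Nat.frequently_atTop_iff_infinite.1 hP
  refine ⟨fun n => (Nat.unpair (Nat.count P n)).1, fun i => frequently_atTop.2 fun N => ?_⟩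
  refine ⟨Nat.nth P (Nat.pair i N), ?_, ?_, Nat.nth_mem_of_infinite hinf _⟩
  · exact (Nat.right_le_pair i N).trans (Nat.nth_strictMono hinf).le_apply
  · simp [Nat.count_nth_of_infinite hinf]

/-- Each point of an open set `Ω` of a locally connected space lies in a connected open subset of
`Ω` which is relatively clopen in `Ω`. -/
lemma exists_isPreconnected_isOpen_diff {X : Type*} [TopologicalSpace X] [LocallyConnectedSpace X]
    {Ω : Set X} (hΩ : IsOpen Ω) {x : X} (hx : x ∈ Ω) :
    ∃ C ⊆ Ω, x ∈ C ∧ IsOpen C ∧ IsPreconnected C ∧ IsOpen (Ω \ C) := by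
  refine ⟨connectedComponentIn Ω x, connectedComponentIn_subset _ _, mem_connectedComponentIn hx,
    hΩ.connectedComponentIn, isPreconnected_connectedComponentIn, ?_⟩
  refine isOpen_iff_mem_nhds.2 fun y hy => ?_
  filter_upwards [hΩ.connectedComponentIn.mem_nhds (mem_connectedComponentIn hy.1)] with z hz
  refine ⟨connectedComponentIn_subset _ _ hz, fun hz' => hy.2 ?_⟩
  rw [connectedComponentIn_eq hz', ← connectedComponentIn_eq hz]
  exact mem_connectedComponentIn hy.1

/-- A sequence in `S_p \ S_uc` stays away from `0` infinitely often on some compact set. -/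
lemma exists_frequently_le_norm_of_notMem_Suc {Ω : Set ℂ} {f : HSeq Ω} (hf : f ∉ Suc Ω) :
    ∃ K : Set Ω, IsCompact K ∧ ∃ ε > 0, ∃ᶠ n in atTop, ∃ z ∈ K, ε ≤ ‖(f n : C(Ω, ℂ)) z‖ := by
  simp only [Suc, Set.mem_ofPred_eq, not_forall, Metric.tendstoUniformlyOn_iff] at hf
  obtain ⟨K, hK, ε, hε, h⟩ := hf
  refine ⟨K, hK, ε, hε, ?_⟩
  simpa [Filter.Frequently] using h

/-- If a nonzero multiple of `f` agrees with `F` along infinitely many indices at which `f` is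
large somewhere on a compact set, then `F` does not converge to `0` locally uniformly. -/
lemma notMem_Suc_of_frequently {Ω : Set ℂ} {f F : HSeq Ω} {K : Set Ω} (hK : IsCompact K)
    {ε : ℝ} (hε : 0 < ε) {c : ℂ} (hc : c ≠ 0)
    (h : ∃ᶠ n in atTop, (∀ z, (F n : C(Ω, ℂ)) z = c * (f n : C(Ω, ℂ)) z) ∧
      ∃ z ∈ K, ε ≤ ‖(f n : C(Ω, ℂ)) z‖) :
    F ∉ Suc Ω := by
  intro hF
  have hu := Metric.tendstoUniformlyOn_iff.1 (hF K hK) (‖c‖ * ε) (by positivity)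
  obtain ⟨n, ⟨hn, z, hz, hle⟩, hlt⟩ := (h.and_eventually hu).exists
  have := hlt z hz
  simp only [Pi.zero_apply, dist_zero_left, hn, norm_mul] at this
  exact absurd this (not_lt.2 (by gcongr))

/-- Identity theorem on a connected open subset of `Ω`. -/
lemma Hol.eq_zero_of_seq {Ω C : Set ℂ} (hCΩ : C ⊆ Ω) (hC : IsOpen C) (hCc : IsPreconnected C)
    (g : Hol Ω) {w : ℕ → Ω} {z₀ : Ω} (hz₀ : (z₀ : ℂ) ∈ C) (hw : Tendsto w atTop (𝓝 z₀))
    (hne : ∀ i, w i ≠ z₀) (hg : ∀ i, (g : C(Ω, ℂ)) (w i) = 0) :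
    ∀ z : Ω, (z : ℂ) ∈ C → (g : C(Ω, ℂ)) z = 0 := by
  obtain ⟨G, hG, he⟩ := g.2
  have hw' : Tendsto (fun i => (w i : ℂ)) atTop (𝓝[≠] (z₀ : ℂ)) :=
    tendsto_nhdsWithin_iff.2 ⟨(continuous_subtype_val.tendsto z₀).comp hw,
      Eventually.of_forall fun i h => hne i (Subtype.ext h)⟩
  have hfr : ∃ᶠ z in 𝓝[≠] (z₀ : ℂ), G z = 0 :=
    hw'.frequently (Frequently.of_forall fun i => by rw [← he, hg])
  intro z hz
  rw [he]
  exact ((hG.mono hCΩ).analyticOnNhd hC).eqOn_zero_of_preconnected_of_frequently_eq_zero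
    hCc hz₀ hfr hz

/-- A function equal to a polynomial on a relatively clopen part `C` of `Ω` and `0` elsewhere is
holomorphic on `Ω`. -/
lemma differentiableOn_indicator_eval {Ω C : Set ℂ} (hC : IsOpen C) (hΩC : IsOpen (Ω \ C))
    (p : Polynomial ℂ) : DifferentiableOn ℂ (C.indicator fun z => p.eval z) Ω := by
  intro z hz
  apply DifferentiableAt.differentiableWithinAt
  by_cases hzC : z ∈ C
  · refine p.differentiable.differentiableAt.congr_of_eventuallyEq ?_
    filter_upwards [hC.mem_nhds hzC] with y hy using Set.indicator_of_mem hy _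
  · refine (differentiableAt_const (0 : ℂ)).congr_of_eventuallyEq ?_
    filter_upwards [hΩC.mem_nhds ⟨hz, hzC⟩] with y hy using Set.indicator_of_notMem hy.2 _

/-- The linear map sending a polynomial to the holomorphic function on `Ω` that equals it on the
relatively clopen part `C` and vanishes elsewhere. -/
noncomputable def Hol.polynomialOn {Ω C : Set ℂ} (hC : IsOpen C) (hΩC : IsOpen (Ω \ C)) :
    Polynomial ℂ →ₗ[ℂ] Hol Ω where
  toFun p := ⟨⟨Ω.domRestrict (C.indicator fun z => p.eval z),
      (differentiableOn_indicator_eval hC hΩC p).continuousOn.domRestrict⟩,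
    _, differentiableOn_indicator_eval hC hΩC p, fun _ => rfl⟩
  map_add' p q := by
    ext z
    change C.indicator (fun z => (p + q).eval z) (z : ℂ) =
      C.indicator (fun z => p.eval z) (z : ℂ) + C.indicator (fun z => q.eval z) (z : ℂ)
    by_cases hz : (z : ℂ) ∈ C <;> simp [hz]
  map_smul' c p := by
    ext z
    change C.indicator (fun z => (c • p).eval z) (z : ℂ) =
      c • C.indicator (fun z => p.eval z) (z : ℂ)
    by_cases hz : (z : ℂ) ∈ C <;> simp [hz]

lemma Hol.polynomialOn_apply {Ω C : Set ℂ} (hC : IsOpen C) (hΩC : IsOpen (Ω \ C))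
    (p : Polynomial ℂ) (z : Ω) :
    (Hol.polynomialOn hC hΩC p : C(Ω, ℂ)) z = C.indicator (fun z => p.eval z) (z : ℂ) := rfl

lemma Hol.polynomialOn_injective {Ω C : Set ℂ} (hC : IsOpen C) (hΩC : IsOpen (Ω \ C))
    (hCΩ : C ⊆ Ω) (hne : C.Nonempty) : Function.Injective (Hol.polynomialOn hC hΩC) := by
  refine (injective_iff_map_eq_zero _).2 fun p hp => ?_
  obtain ⟨x, hx⟩ := hne
  refine p.eq_zero_of_infinite_isRoot ((infinite_of_mem_nhds x (hC.mem_nhds hx)).mono fun z hz => ?_)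
  have h := Hol.polynomialOn_apply hC hΩC p ⟨z, hCΩ hz⟩
  simpa [hp, hz] using h.symm

/-- For `u = α F_m(ζ)` and `g = F_0 - u f_0`, the sequences `F` such that `g` vanishes off `C` and
`F_n = (u + χ_{j(n)} g(w_{j(n)})) f_n` for all `n ≠ 0`. -/
def multiplierSubmodule {Ω : Set ℂ} (f : HSeq Ω) (C : Set ℂ) (j : ℕ → ℕ) (χ : ℕ → ℂ) (w : ℕ → Ω)
    (α : ℂ) (m : ℕ) (ζ : Ω) : Submodule ℂ (HSeq Ω) where
  carrier := {F | (∀ z : Ω, (z : ℂ) ∉ C →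
      (F 0 : C(Ω, ℂ)) z = α * (F m : C(Ω, ℂ)) ζ * (f 0 : C(Ω, ℂ)) z) ∧
    ∀ n, n ≠ 0 → ∀ z, (F n : C(Ω, ℂ)) z =
      (α * (F m : C(Ω, ℂ)) ζ + χ (j n) * ((F 0 : C(Ω, ℂ)) (w (j n)) -
        α * (F m : C(Ω, ℂ)) ζ * (f 0 : C(Ω, ℂ)) (w (j n)))) * (f n : C(Ω, ℂ)) z}
  add_mem' := by
    rintro F G ⟨hF, hF'⟩ ⟨hG, hG'⟩
    refine ⟨fun z hz => ?_, fun n hn z => ?_⟩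
    · simp only [Pi.add_apply, Subalgebra.coe_add, ContinuousMap.add_apply]
      linear_combination hF z hz + hG z hz
    · simp only [Pi.add_apply, Subalgebra.coe_add, ContinuousMap.add_apply]
      linear_combination hF' n hn z + hG' n hn z
  zero_mem' := by simp
  smul_mem' := by
    rintro c F ⟨hF, hF'⟩
    refine ⟨fun z hz => ?_, fun n hn z => ?_⟩
    · simp only [Pi.smul_apply, Subalgebra.coe_smul, ContinuousMap.smul_apply, smul_eq_mul]
      linear_combination c * hF z hz
    · simp only [Pi.smul_apply, Subalgebra.coe_smul, ContinuousMap.smul_apply, smul_eq_mul]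
      linear_combination c * hF' n hn z

lemma HSeq.continuous_eval {Ω : Set ℂ} (n : ℕ) (z : Ω) :
    Continuous fun F : HSeq Ω => (F n : C(Ω, ℂ)) z :=
  (continuous_eval_const z).comp (continuous_subtype_val.comp (continuous_apply n))

lemma isClosed_multiplierSubmodule {Ω : Set ℂ} (f : HSeq Ω) (C : Set ℂ) (j : ℕ → ℕ) (χ : ℕ → ℂ)
    (w : ℕ → Ω) (α : ℂ) (m : ℕ) (ζ : Ω) :
    IsClosed (multiplierSubmodule f C j χ w α m ζ : Set (HSeq Ω)) := by
  have hev := HSeq.continuous_eval (Ω := Ω)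
  refine IsClosed.inter (s₁ := {F | ∀ z : Ω, _ → _}) (s₂ := {F | ∀ n, n ≠ 0 → ∀ z, _}) ?_ ?_
  · simp only [Set.ofPred_forall]
    exact isClosed_iInter fun z => isClosed_iInter fun _ =>
      isClosed_eq (hev 0 z) ((continuous_const.mul (hev m ζ)).mul continuous_const)
  · simp only [Set.ofPred_forall]
    refine isClosed_iInter fun n => isClosed_iInter fun _ => isClosed_iInter fun z =>
      isClosed_eq (hev n z) ?_
    have h0 := hev 0 (w (j n))
    have hm := hev m ζ
    fun_prop

/-- The sequences `(g, (χ_{j(n)} g(w_{j(n)}) f_n)_{n ≠ 0})`, with `g` the polynomial `p` on `C` and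
`0` elsewhere. -/
noncomputable def multiplierPolynomial {Ω C : Set ℂ} (hC : IsOpen C) (hΩC : IsOpen (Ω \ C))
    (f : HSeq Ω) (j : ℕ → ℕ) (χ : ℕ → ℂ) (w : ℕ → Ω) : Polynomial ℂ →ₗ[ℂ] HSeq Ω where
  toFun p n := if n = 0 then Hol.polynomialOn hC hΩC p else
    (χ (j n) * (Hol.polynomialOn hC hΩC p : C(Ω, ℂ)) (w (j n))) • f n
  map_add' p q := by
    funext n
    by_cases hn : n = 0
    · simp [hn]
    · simp [hn, mul_add, add_smul]
  map_smul' c p := by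
    funext n
    by_cases hn : n = 0
    · simp [hn]
    · simp [hn, smul_smul, mul_left_comm]

lemma multiplierPolynomial_mem {Ω C : Set ℂ} (hC : IsOpen C) (hΩC : IsOpen (Ω \ C))
    (f : HSeq Ω) (j : ℕ → ℕ) (χ : ℕ → ℂ) (w : ℕ → Ω) (α : ℂ) {m : ℕ} (hm : m ≠ 0)
    (hχ : χ (j m) = 0) (ζ : Ω) (p : Polynomial ℂ) :
    multiplierPolynomial hC hΩC f j χ w p ∈ multiplierSubmodule f C j χ w α m ζ := by
  have hζ : ((multiplierPolynomial hC hΩC f j χ w p m : Hol Ω) : C(Ω, ℂ)) ζ = 0 := by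
    simp [multiplierPolynomial, hm, hχ]
  refine ⟨fun z hz => ?_, fun n hn z => ?_⟩
  · rw [hζ]
    simp [multiplierPolynomial, Hol.polynomialOn_apply, hz]
  · rw [hζ]
    simp [multiplierPolynomial, hn]

lemma not_finite_multiplierSubmodule {Ω C : Set ℂ} (hC : IsOpen C) (hΩC : IsOpen (Ω \ C))
    (hCΩ : C ⊆ Ω) (hne : C.Nonempty) (f : HSeq Ω) (j : ℕ → ℕ) (χ : ℕ → ℂ) (w : ℕ → Ω) (α : ℂ)
    {m : ℕ} (hm : m ≠ 0) (hχ : χ (j m) = 0) (ζ : Ω) :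
    ¬ Module.Finite ℂ (multiplierSubmodule f C j χ w α m ζ) := by
  intro hfin
  let : AddCommGroup (multiplierSubmodule f C j χ w α m ζ) := Module.addCommMonoidToAddCommGroup ℂ
  have := isNoetherian_of_isNoetherianRing_of_finite ℂ (multiplierSubmodule f C j χ w α m ζ)
  refine Polynomial.not_finite (R := ℂ) (Module.Finite.of_injective
    ((multiplierPolynomial hC hΩC f j χ w).codRestrict (multiplierSubmodule f C j χ w α m ζ)
      (multiplierPolynomial_mem hC hΩC f j χ w α hm hχ ζ)) fun p q hpq => ?_)
  have h := congrFun (congrArg Subtype.val hpq) 0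
  exact Hol.polynomialOn_injective hC hΩC hCΩ hne (by simpa [multiplierPolynomial] using h)

lemma multiplierSubmodule_subset_Sp {Ω : Set ℂ} {f : HSeq Ω} (hf : f ∈ Sp Ω) (C : Set ℂ)
    (j : ℕ → ℕ) {χ : ℕ → ℂ} (hχ : ∀ i, ‖χ i‖ ≤ 1) {w : ℕ → Ω} {z₀ : Ω}
    (hw : Tendsto w atTop (𝓝 z₀)) (α : ℂ) (m : ℕ) (ζ : Ω) :
    (multiplierSubmodule f C j χ w α m ζ : Set (HSeq Ω)) ⊆ Sp Ω := by
  rintro F ⟨-, hF⟩ z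
  set u := α * (F m : C(Ω, ℂ)) ζ
  have hlim : Tendsto (fun i => (F 0 : C(Ω, ℂ)) (w i) - u * (f 0 : C(Ω, ℂ)) (w i)) atTop
      (𝓝 ((F 0 : C(Ω, ℂ)) z₀ - u * (f 0 : C(Ω, ℂ)) z₀)) :=
    (((F 0 : C(Ω, ℂ)).continuous.tendsto z₀).comp hw).sub
      ((((f 0 : C(Ω, ℂ)).continuous.tendsto z₀).comp hw).const_mul u)
  obtain ⟨R, hR⟩ := (Metric.isBounded_range_of_tendsto _ hlim).exists_norm_le
  have hR' : ∀ i, ‖(F 0 : C(Ω, ℂ)) (w i) - u * (f 0 : C(Ω, ℂ)) (w i)‖ ≤ R :=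
    fun i => hR _ ⟨i, rfl⟩
  refine squeeze_zero_norm' (a := fun n => (‖u‖ + R) * ‖(f n : C(Ω, ℂ)) z‖) ?_
    (by simpa using (hf z).norm.const_mul (‖u‖ + R))
  filter_upwards [eventually_ne_atTop 0] with n hn
  rw [hF n hn z, norm_mul]
  gcongr
  refine (norm_add_le _ _).trans ?_
  gcongr
  rw [norm_mul]
  exact (mul_le_of_le_one_left (norm_nonneg _) (hχ _)).trans (hR' _)

/-- `S_p \ S_uc` is pointwise spaceable in `H(Ω)^ℕ`. -/
theorem Sp_diff_Suc_pointwise_spaceable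
    (Ω : Set ℂ) (hΩ : IsOpen Ω) (hne : Ω.Nonempty) :
    ∀ f ∈ Sp Ω \ Suc Ω, ∃ M : Submodule ℂ (HSeq Ω),
      IsClosed (M : Set (HSeq Ω)) ∧ ¬ Module.Finite ℂ M ∧
      f ∈ M ∧ (M : Set (HSeq Ω)) \ {0} ⊆ Sp Ω \ Suc Ω := by
  intro f ⟨hfp, hfu⟩
  obtain ⟨x, hx⟩ := hne
  obtain ⟨C, hCΩ, hxC, hC, hCc, hΩC⟩ := exists_isPreconnected_isOpen_diff hΩ hx
  obtain ⟨K, hK, ε, hε, hfr⟩ := exists_frequently_le_norm_of_notMem_Suc hfu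
  obtain ⟨j, hj⟩ := exists_partition_frequently hfr
  obtain ⟨m, ⟨hjm, ζ, -, hζ⟩, hm⟩ := ((hj 0).and_eventually (eventually_ne_atTop 0)).exists
  have hζ0 : (f m : C(Ω, ℂ)) ζ ≠ 0 := norm_pos_iff.1 (hε.trans_le hζ)
  have hcl : x ∈ closure (Ω \ {x}) := by
    rw [mem_closure_iff_nhdsWithin_neBot, Set.sdiff_eq,
      nhdsWithin_inter_of_mem (mem_nhdsWithin_of_mem_nhds (hΩ.mem_nhds hx))]
    infer_instance
  obtain ⟨v, hv, hvlim⟩ := mem_closure_iff_seq_limit.1 hcl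
  let z₀ : Ω := ⟨x, hx⟩
  let y : ℕ → Ω := fun i => ⟨v i, (hv i).1⟩
  have hy : Tendsto y atTop (𝓝 z₀) := tendsto_subtype_rng.2 hvlim
  have hyne : ∀ i, y i ≠ z₀ := fun i h => (hv i).2 (congrArg Subtype.val h)
  let χ : ℕ → ℂ := fun i => if i = 0 then 0 else 1
  have hχ : ∀ i, ‖χ i‖ ≤ 1 := fun i => by by_cases hi : i = 0 <;> simp [χ, hi]
  have hχm : χ (j m) = 0 := by simp [χ, hjm]
  let α : ℂ := ((f m : C(Ω, ℂ)) ζ)⁻¹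
  have hα : α * (f m : C(Ω, ℂ)) ζ = 1 := inv_mul_cancel₀ hζ0
  refine ⟨multiplierSubmodule f C j χ y α m ζ, isClosed_multiplierSubmodule ..,
    not_finite_multiplierSubmodule hC hΩC hCΩ ⟨x, hxC⟩ f j χ y α hm hχm ζ,
    ⟨fun z _ => by rw [hα, one_mul], fun n _ z => by rw [hα]; ring⟩, ?_⟩
  rintro F ⟨hFM, hF0⟩
  refine ⟨multiplierSubmodule_subset_Sp hfp C j hχ hy α m ζ hFM, ?_⟩
  obtain ⟨hoff, hF⟩ := hFM
  by_cases hu : α * (F m : C(Ω, ℂ)) ζ = 0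
  · simp only [hu, zero_mul, sub_zero, zero_add] at hoff hF
    obtain ⟨i, hi0, hi⟩ : ∃ i, i ≠ 0 ∧ (F 0 : C(Ω, ℂ)) (y i) ≠ 0 := by
      by_contra! hall
      have hzero : (F 0 : C(Ω, ℂ)) = 0 := by
        ext z
        by_cases hz : (z : ℂ) ∈ C
        · exact Hol.eq_zero_of_seq hCΩ hC hCc (F 0) (z₀ := z₀) hxC
            (hy.comp (tendsto_add_atTop_nat 1)) (fun _ => hyne _)
            (fun i => hall _ i.succ_ne_zero) z hz
        · exact hoff z hz
      refine hF0 (funext fun n => Subtype.ext (ContinuousMap.ext fun z => ?_))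
      by_cases hn : n = 0
      · simp [hn, hzero]
      · simp [hF n hn z, hzero]
    refine notMem_Suc_of_frequently hK hε hi
      (((hj i).and_eventually (eventually_ne_atTop 0)).mono fun n hn => ⟨fun z => ?_, hn.1.2⟩)
    rw [hF n hn.2 z, hn.1.1]
    simp [χ, hi0]
  · refine notMem_Suc_of_frequently hK hε hu
      (((hj 0).and_eventually (eventually_ne_atTop 0)).mono fun n hn => ⟨fun z => ?_, hn.1.2⟩)
    rw [hF n hn.2 z, hn.1.1]
    simp [χ]
end

section
/- Let Ω be a nonempty open subset of ℂ. Then the set S_uc \ S_u is pointwise spaceable in H(Ω)^ℕ: for every f ∈ S_uc \ S_u there exists a closed infinite-dimensional vector subspace M of H(Ω)^ℕ such that f ∈ M and M \ {0} ⊆ S_uc \ S_u. -/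
open Filter Topology

set_option synthInstance.maxHeartbeats 1000000
set_option maxHeartbeats 1000000

/-- A property holding frequently along `ℕ` can be split by a labelling `j : ℕ → ℕ` so that every
label occurs frequently. -/
theorem exists_frequently_and_label_eq {P : ℕ → Prop} (hP : ∃ᶠ n in atTop, P n) :
    ∃ j : ℕ → ℕ, ∀ k, ∃ᶠ n in atTop, P n ∧ j n = k := by
  classical
  have hinf : (Set.ofPred P).Infinite := Nat.frequently_atTop_iff_infinite.1 hP
  refine ⟨fun n => (Nat.unpair (Nat.count P n)).1, fun k => ?_⟩
  rw [frequently_atTop]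
  intro N
  refine ⟨Nat.nth P (Nat.pair k N), ?_, Nat.nth_mem_of_infinite hinf _, ?_⟩
  · exact (Nat.right_le_pair k N).trans (Nat.nth_strictMono hinf).le_apply
  · simp [Nat.count_nth_of_infinite hinf]

namespace HSeq

variable {Ω : Set ℂ}

/-- Evaluation of the `n`-th function of a sequence at a point, as a continuous functional. -/
noncomputable def evalCLM (n : ℕ) (z : Ω) : HSeq Ω →L[ℂ] ℂ where
  toFun g := (g n : C(Ω, ℂ)) z
  map_add' _ _ := rfl
  map_smul' _ _ := rfl
  cont := (ContinuousEvalConst.continuous_eval_const z).comp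
    (continuous_subtype_val.comp (continuous_apply n))

@[simp]
theorem evalCLM_apply (n : ℕ) (z : Ω) (g : HSeq Ω) : evalCLM n z g = (g n : C(Ω, ℂ)) z := rfl

/-- The value at `z` of the initial function of `g - L g • f`. -/
noncomputable def residual (f : HSeq Ω) (L : HSeq Ω →L[ℂ] ℂ) (z : Ω) : HSeq Ω →L[ℂ] ℂ :=
  evalCLM 0 z + (-(f 0 : C(Ω, ℂ)) z) • L

theorem residual_apply (f : HSeq Ω) (L : HSeq Ω →L[ℂ] ℂ) (z : Ω) (g : HSeq Ω) :
    residual f L z g = (g 0 : C(Ω, ℂ)) z - (f 0 : C(Ω, ℂ)) z * L g := by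
  rw [sub_eq_add_neg, ← neg_mul]
  rfl

/-- The sequences `g` whose residual `h = g 0 - L g • f 0` vanishes at `z₀` and off `C`, and
whose later terms are `g n = (L g + h (a n)) • f n`. -/
def multiplierSubmodule (f : HSeq Ω) (L : HSeq Ω →L[ℂ] ℂ) (z₀ : Ω) (C : Set Ω) (a : ℕ → Ω) :
    Submodule ℂ (HSeq Ω) where
  carrier := {g | residual f L z₀ g = 0 ∧ (∀ z ∉ C, residual f L z g = 0) ∧
    ∀ n, n ≠ 0 → ∀ z, evalCLM n z g = (L g + residual f L (a n) g) * (f n : C(Ω, ℂ)) z}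
  zero_mem' := by simp only [Set.mem_ofPred_eq, map_zero]; simp
  add_mem' := by
    rintro g g' ⟨h1, h2, h3⟩ ⟨h1', h2', h3'⟩
    refine ⟨by rw [map_add, h1, h1', add_zero],
      fun z hz => by rw [map_add, h2 z hz, h2' z hz, add_zero], fun n hn z => ?_⟩
    rw [map_add, map_add, map_add, h3 n hn z, h3' n hn z]
    ring
  smul_mem' := by
    rintro c g ⟨h1, h2, h3⟩
    refine ⟨by rw [map_smul, h1, smul_zero],
      fun z hz => by rw [map_smul, h2 z hz, smul_zero], fun n hn z => ?_⟩
    rw [map_smul, map_smul, map_smul, h3 n hn z]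
    simp only [smul_eq_mul]
    ring

theorem mem_multiplierSubmodule {f : HSeq Ω} {L : HSeq Ω →L[ℂ] ℂ} {z₀ : Ω} {C : Set Ω}
    {a : ℕ → Ω} {g : HSeq Ω} :
    g ∈ multiplierSubmodule f L z₀ C a ↔
      residual f L z₀ g = 0 ∧ (∀ z ∉ C, residual f L z g = 0) ∧
      ∀ n, n ≠ 0 → ∀ z, (g n : C(Ω, ℂ)) z =
        (L g + residual f L (a n) g) * (f n : C(Ω, ℂ)) z := Iff.rfl

theorem isClosed_multiplierSubmodule (f : HSeq Ω) (L : HSeq Ω →L[ℂ] ℂ) (z₀ : Ω) (C : Set Ω)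
    (a : ℕ → Ω) : IsClosed (multiplierSubmodule f L z₀ C a : Set (HSeq Ω)) := by
  refine IsClosed.inter (isClosed_eq (residual f L z₀).continuous continuous_const)
    (IsClosed.inter (s₁ := {g | ∀ z ∉ C, residual f L z g = 0})
      (s₂ := {g | ∀ n, n ≠ 0 → ∀ z, evalCLM n z g =
        (L g + residual f L (a n) g) * (f n : C(Ω, ℂ)) z}) ?_ ?_)
  · simp only [Set.ofPred_forall]
    exact isClosed_iInter fun z => isClosed_iInter fun _ =>
      isClosed_eq (residual f L z).continuous continuous_const
  · simp only [Set.ofPred_forall]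
    exact isClosed_iInter fun n => isClosed_iInter fun _ => isClosed_iInter fun z =>
      isClosed_eq (evalCLM n z).continuous
        ((L.continuous.add (residual f L (a n)).continuous).mul continuous_const)

theorem self_mem_multiplierSubmodule {f : HSeq Ω} {L : HSeq Ω →L[ℂ] ℂ} (hL : L f = 1)
    (z₀ : Ω) (C : Set Ω) (a : ℕ → Ω) : f ∈ multiplierSubmodule f L z₀ C a := by
  simp [mem_multiplierSubmodule, residual_apply, hL]

/-- `S_uc` is stable under multiplication by a bounded sequence of scalars, up to changing the
initial term. -/
theorem mem_Suc_of_eq_mul {f g : HSeq Ω} (hf : f ∈ Suc Ω) {m : ℕ → ℂ} {B : ℝ}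
    (hm : ∀ n, ‖m n‖ ≤ B)
    (hg : ∀ n, n ≠ 0 → ∀ z, (g n : C(Ω, ℂ)) z = m n * (f n : C(Ω, ℂ)) z) : g ∈ Suc Ω := by
  intro K hK
  have hB : 0 ≤ B := (norm_nonneg _).trans (hm 0)
  have hfK := hf K hK
  rw [Metric.tendstoUniformlyOn_iff] at hfK ⊢
  intro ε hε
  filter_upwards [hfK (ε / (B + 1)) (by positivity), eventually_ne_atTop 0] with n hn hn0 z hz
  have h := hn z hz
  simp only [Pi.zero_apply, dist_zero_left] at h ⊢
  rw [hg n hn0 z, norm_mul]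
  rw [lt_div_iff₀ (by positivity)] at h
  nlinarith [mul_le_mul_of_nonneg_right (hm n) (norm_nonneg ((f n : C(Ω, ℂ)) z)),
    norm_nonneg ((f n : C(Ω, ℂ)) z)]

/-- If `g n` is infinitely often `c • f n` at indices where `f n` is somewhere of size at least
`ε`, and `g → 0` uniformly, then `c = 0`. -/
theorem eq_zero_of_mem_Su {f g : HSeq Ω} (hg : g ∈ Su Ω) {ε : ℝ} (hε : 0 < ε) {c : ℂ}
    (h : ∃ᶠ n in atTop, ∃ z, ε ≤ ‖(f n : C(Ω, ℂ)) z‖ ∧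
      (g n : C(Ω, ℂ)) z = c * (f n : C(Ω, ℂ)) z) : c = 0 := by
  by_contra hc
  have hg' : TendstoUniformly (fun n (z : Ω) => (g n : C(Ω, ℂ)) z) 0 atTop := hg
  rw [Metric.tendstoUniformly_iff] at hg'
  obtain ⟨n, ⟨z, hz, hgz⟩, hn⟩ :=
    (h.and_eventually (hg' (‖c‖ * ε) (mul_pos (norm_pos_iff.2 hc) hε))).exists
  have := hn z
  simp only [Pi.zero_apply, dist_zero_left] at this
  rw [hgz, norm_mul] at this
  exact absurd this (not_lt.2 (mul_le_mul_of_nonneg_left hz (norm_nonneg c)))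

end HSeq

namespace Hol

variable {Ω : Set ℂ}

/-- The coordinate function on `Ω`. -/
def coord (Ω : Set ℂ) : Hol Ω :=
  ⟨⟨fun z => (z : ℂ), continuous_subtype_val⟩, id, differentiableOn_id, fun _ => rfl⟩

theorem aeval_coord_apply (p : Polynomial ℂ) (z : Ω) :
    (Polynomial.aeval (coord Ω) p : C(Ω, ℂ)) z = p.eval (z : ℂ) := by
  induction p using Polynomial.induction_on' with
  | add p q hp hq => simp_all
  | monomial n c =>
    simp [Polynomial.aeval_monomial, coord, Algebra.algebraMap_eq_smul_one]

/-- The indicator function of a connected component of an open set is holomorphic. -/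
theorem exists_indicator_connectedComponentIn (hΩ : IsOpen Ω) (z₀ : ℂ) :
    ∃ u : Hol Ω, (∀ z : Ω, (z : ℂ) ∈ connectedComponentIn Ω z₀ → (u : C(Ω, ℂ)) z = 1) ∧
      ∀ z : Ω, (z : ℂ) ∉ connectedComponentIn Ω z₀ → (u : C(Ω, ℂ)) z = 0 := by
  classical
  set χ : ℂ → ℂ := (connectedComponentIn Ω z₀).indicator 1 with hχ
  have hd : DifferentiableOn ℂ χ Ω := by
    intro z hz
    have hloc : χ =ᶠ[𝓝 z] fun _ => χ z := by
      filter_upwards [hΩ.connectedComponentIn.mem_nhds (mem_connectedComponentIn hz)] with w hw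
      have hiff : w ∈ connectedComponentIn Ω z₀ ↔ z ∈ connectedComponentIn Ω z₀ := by
        have hzw := connectedComponentIn_eq hw
        constructor <;> intro h <;> rw [connectedComponentIn_eq h]
        · exact hzw ▸ mem_connectedComponentIn hz
        · exact hw
      simp only [hχ, Set.indicator_apply, hiff, Pi.one_apply]
    exact ((differentiableAt_const (χ z)).congr_of_eventuallyEq hloc).differentiableWithinAt
  refine ⟨⟨⟨fun z => χ z, hd.continuousOn.domRestrict⟩, χ, hd, fun _ => rfl⟩, ?_, ?_⟩
  · intro z hz
    exact Set.indicator_of_mem hz _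
  · intro z hz
    exact Set.indicator_of_notMem hz _

/-- A holomorphic function vanishing along a nontrivial sequence tending to `z₀` vanishes on the
connected component of `z₀`. -/
theorem eq_zero_of_tendsto (hΩ : IsOpen Ω) (h : Hol Ω) {z₀ : Ω} {q : ℕ → Ω}
    (hq : Tendsto q atTop (𝓝 z₀)) (hq' : ∀ᶠ n in atTop, q n ≠ z₀)
    (hzero : ∀ n, (h : C(Ω, ℂ)) (q n) = 0) {z : Ω}
    (hz : (z : ℂ) ∈ connectedComponentIn Ω z₀) : (h : C(Ω, ℂ)) z = 0 := by
  obtain ⟨φ, hφ, he⟩ := h.2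
  have han : AnalyticOnNhd ℂ φ (connectedComponentIn Ω z₀) :=
    (hφ.mono (connectedComponentIn_subset Ω z₀)).analyticOnNhd hΩ.connectedComponentIn
  have htend : Tendsto (fun n => (q n : ℂ)) atTop (𝓝[≠] (z₀ : ℂ)) := by
    refine tendsto_nhdsWithin_iff.2 ⟨(continuous_subtype_val.tendsto z₀).comp hq, ?_⟩
    filter_upwards [hq'] with n hn
    exact fun h => hn (Subtype.ext h)
  rw [he z]
  refine han.eqOn_zero_of_preconnected_of_frequently_eq_zero isPreconnected_connectedComponentIn
    (mem_connectedComponentIn z₀.2) (htend.frequently (Frequently.of_forall fun n => ?_)) hz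
  rw [← he, hzero]

end Hol

/-- In an open set, every point is the limit of a sequence in its connected component, taking the
value `z₀` only at the index `0`. -/
theorem exists_seq_tendsto_connectedComponentIn {Ω : Set ℂ} (hΩ : IsOpen Ω) (z₀ : Ω) :
    ∃ q : ℕ → Ω, q 0 = z₀ ∧ Function.Injective q ∧ Tendsto q atTop (𝓝 z₀) ∧
      ∀ n, (q n : ℂ) ∈ connectedComponentIn Ω z₀ := by
  obtain ⟨r, hr, hball⟩ := Metric.nhds_basis_closedBall.mem_iff.1
    (hΩ.connectedComponentIn.mem_nhds (mem_connectedComponentIn z₀.2))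
  have hmem : ∀ n : ℕ, (z₀ : ℂ) + r * (n : ℂ)⁻¹ ∈ connectedComponentIn Ω z₀ := by
    intro n
    refine hball ?_
    rw [mem_closedBall_iff_norm, add_sub_cancel_left, norm_mul, norm_inv, Complex.norm_natCast,
      Complex.norm_of_nonneg hr.le]
    exact mul_le_of_le_one_right hr.le (Nat.cast_inv_le_one n)
  refine ⟨fun n => ⟨_, connectedComponentIn_subset Ω z₀ (hmem n)⟩, by simp, ?_, ?_, hmem⟩
  · intro m n hmn
    have hr' : (r : ℂ) ≠ 0 := by exact_mod_cast hr.ne'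
    simpa [hr'] using hmn
  · rw [tendsto_subtype_rng]
    simpa using (tendsto_const_nhds (x := (z₀ : ℂ))).add
      ((tendsto_inv_atTop_nhds_zero_nat (𝕜 := ℂ)).const_mul (r : ℂ))

/-- A submodule containing an injective linear image of the polynomials is not finitely
generated. -/
theorem Submodule.not_finite_of_polynomial_linearMap {K V : Type*} [Field K] [AddCommGroup V]
    [Module K V] {M : Submodule K V} (T : Polynomial K →ₗ[K] V) (hTM : ∀ p, T p ∈ M)
    (hT : ∀ p, T p = 0 → p = 0) : ¬ Module.Finite K M := by
  intro _
  refine Polynomial.not_finite (Module.Finite.of_injective (T.codRestrict M hTM) ?_)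
  rw [← LinearMap.ker_eq_bot, LinearMap.ker_codRestrict, LinearMap.ker_eq_bot']
  exact hT

namespace HSeq

variable {Ω : Set ℂ}

/-- The multiplier submodule over a connected component is infinite-dimensional. -/
theorem not_finite_multiplierSubmodule (hΩ : IsOpen Ω) (f : HSeq Ω) {L : HSeq Ω →L[ℂ] ℂ}
    {z₀ : Ω} {q : ℕ → Ω} (hq0 : q 0 = z₀) (hqi : Function.Injective q)
    (hqC : ∀ n, (q n : ℂ) ∈ connectedComponentIn Ω z₀) {j : ℕ → ℕ}
    (hL : ∀ g : HSeq Ω, (∀ n, n ≠ 0 → j n = 0 → g n = 0) → L g = 0) :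
    ¬ Module.Finite ℂ
      (multiplierSubmodule f L z₀ {z | (z : ℂ) ∈ connectedComponentIn Ω z₀} (q ∘ j)) := by
  obtain ⟨u, hu1, hu0⟩ := Hol.exists_indicator_connectedComponentIn hΩ (z₀ : ℂ)
  let w : Hol Ω := u * (Hol.coord Ω - algebraMap ℂ (Hol Ω) z₀)
  have hw : ∀ z : Ω, (w : C(Ω, ℂ)) z = (u : C(Ω, ℂ)) z * (z - z₀) := fun z => rfl
  let T : Polynomial ℂ →ₗ[ℂ] HSeq Ω := LinearMap.pi fun n =>
    if n = 0 then (LinearMap.mulLeft ℂ w).comp (Polynomial.aeval (Hol.coord Ω)).toLinearMap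
    else ((Polynomial.leval (q (j n) : ℂ)).smulRight
      (((q (j n) : ℂ) - z₀) • f n))
  have hT0 : ∀ p (z : Ω), (T p 0 : C(Ω, ℂ)) z =
      (u : C(Ω, ℂ)) z * (z - z₀) * p.eval (z : ℂ) := by
    intro p z
    rw [← hw, ← Hol.aeval_coord_apply p z]
    rfl
  have hTn : ∀ p n, n ≠ 0 →
      T p n = p.eval (q (j n) : ℂ) • (((q (j n) : ℂ) - z₀) • f n) := by
    intro p n hn
    simp [T, hn, Polynomial.leval]
  have hTL : ∀ p, L (T p) = 0 := by
    intro p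
    refine hL _ fun n hn hj => ?_
    rw [hTn p n hn, hj, hq0, sub_self, zero_smul, smul_zero]
  have hTE : ∀ p z, residual f L z (T p) = (u : C(Ω, ℂ)) z * (z - z₀) * p.eval (z : ℂ) := by
    intro p z
    rw [residual_apply, hTL, hT0, mul_zero, sub_zero]
  have hTM : ∀ p, T p ∈
      multiplierSubmodule f L z₀ {z | (z : ℂ) ∈ connectedComponentIn Ω z₀} (q ∘ j) := by
    intro p
    refine mem_multiplierSubmodule.2 ⟨by simp [hTE], fun z hz => ?_, fun n hn z => ?_⟩
    · rw [hTE, hu0 z hz, zero_mul, zero_mul]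
    · rw [hTE, hTL, hTn p n hn, Function.comp_apply, hu1 _ (hqC _)]
      simp only [SetLike.val_smul, ContinuousMap.smul_apply, smul_eq_mul]
      ring
  refine Submodule.not_finite_of_polynomial_linearMap (K := ℂ) (V := HSeq Ω) T hTM fun p hp => ?_
  refine p.eq_zero_of_infinite_isRoot (Set.Infinite.mono ?_
    (Set.infinite_range_of_injective (f := fun n : ℕ => (q (n + 1) : ℂ)) fun m n hmn =>
      Nat.succ_injective (hqi (Subtype.ext hmn))))
  rintro _ ⟨n, rfl⟩
  have h := hT0 p (q (n + 1))
  have hne : (q (n + 1) : ℂ) - z₀ ≠ 0 := by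
    rw [sub_ne_zero, ← hq0]
    exact fun h => Nat.succ_ne_zero n (hqi (Subtype.ext h))
  rw [hp, hu1 _ (hqC _), one_mul] at h
  exact (mul_eq_zero.1 h.symm).resolve_left hne

end HSeq

/-- `S_uc \ S_u` is pointwise spaceable in `H(Ω)^ℕ`. -/
theorem Suc_diff_Su_pointwise_spaceable
    (Ω : Set ℂ) (hΩ : IsOpen Ω) (hne : Ω.Nonempty) :
    ∀ f ∈ Suc Ω \ Su Ω, ∃ M : Submodule ℂ (HSeq Ω),
      IsClosed (M : Set (HSeq Ω)) ∧ ¬ Module.Finite ℂ M ∧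
      f ∈ M ∧ (M : Set (HSeq Ω)) \ {0} ⊆ Suc Ω \ Su Ω := by
  rintro f ⟨hfc, hfu⟩
  obtain ⟨z₀, hz₀⟩ := hne
  lift z₀ to Ω using hz₀
  obtain ⟨q, hq0, hqi, hqt, hqC⟩ := exists_seq_tendsto_connectedComponentIn hΩ z₀
  obtain ⟨ε, hε, hfreq⟩ : ∃ ε > 0, ∃ᶠ n in atTop, ∃ z : Ω, ε ≤ ‖(f n : C(Ω, ℂ)) z‖ := by
    have h : ¬ TendstoUniformly (fun n (z : Ω) => (f n : C(Ω, ℂ)) z) 0 atTop := hfu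
    rw [Metric.tendstoUniformly_iff] at h
    simpa [Filter.Frequently] using h
  obtain ⟨j, hj⟩ := exists_frequently_and_label_eq hfreq
  obtain ⟨n₁, ⟨⟨z₁, hz₁⟩, hj₁⟩, hn₁⟩ := ((hj 0).and_eventually (eventually_ne_atTop 0)).exists
  have hfz₁ : (f n₁ : C(Ω, ℂ)) z₁ ≠ 0 := norm_pos_iff.1 (hε.trans_le hz₁)
  let L : HSeq Ω →L[ℂ] ℂ := ((f n₁ : C(Ω, ℂ)) z₁)⁻¹ • HSeq.evalCLM n₁ z₁
  have hL : ∀ g, L g = ((f n₁ : C(Ω, ℂ)) z₁)⁻¹ * (g n₁ : C(Ω, ℂ)) z₁ := fun g => rfl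
  refine ⟨HSeq.multiplierSubmodule f L z₀ {z | (z : ℂ) ∈ connectedComponentIn Ω z₀} (q ∘ j),
    HSeq.isClosed_multiplierSubmodule .., ?_,
    HSeq.self_mem_multiplierSubmodule (by rw [hL, inv_mul_cancel₀ hfz₁]) .., ?_⟩
  · refine HSeq.not_finite_multiplierSubmodule hΩ f hq0 hqi hqC fun g hg => ?_
    rw [hL, hg n₁ hn₁ hj₁]
    simp
  rintro g ⟨hgM, hg0⟩
  obtain ⟨hgz₀, hgC, hgn⟩ := HSeq.mem_multiplierSubmodule.1 hgM
  let h : Hol Ω := g 0 - L g • f 0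
  have hh : ∀ z, HSeq.residual f L z g = (h : C(Ω, ℂ)) z := by
    intro z
    rw [HSeq.residual_apply, mul_comm]
    rfl
  simp only [hh, Function.comp_apply] at hgz₀ hgC hgn
  constructor
  · have hconv : Tendsto (fun k => L g + (h : C(Ω, ℂ)) (q k)) atTop
        (𝓝 (L g + (h : C(Ω, ℂ)) z₀)) :=
      (((h : C(Ω, ℂ)).continuous.tendsto z₀).comp hqt).const_add _
    obtain ⟨B, hB⟩ := (Metric.isBounded_range_of_tendsto _ hconv).exists_norm_le
    exact HSeq.mem_Suc_of_eq_mul hfc (fun n => hB _ ⟨j n, rfl⟩) hgn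
  · intro hgu
    have hmult : ∀ k, L g + (h : C(Ω, ℂ)) (q k) = 0 := by
      intro k
      refine HSeq.eq_zero_of_mem_Su (f := f) hgu hε
        (((hj k).and_eventually (eventually_ne_atTop 0)).mono ?_)
      rintro n ⟨⟨⟨z, hz⟩, rfl⟩, hn⟩
      exact ⟨z, hz, hgn n hn z⟩
    have hLg : L g = 0 := by simpa [hq0, hgz₀] using hmult 0
    have hhz : ∀ z, (h : C(Ω, ℂ)) z = 0 := by
      intro z
      by_cases hz : (z : ℂ) ∈ connectedComponentIn Ω z₀
      · refine Hol.eq_zero_of_tendsto hΩ h hqt ?_ (fun n => by simpa [hLg] using hmult n) hz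
        filter_upwards [eventually_ne_atTop 0] with n hn
        exact fun he => hn (hqi (he.trans hq0.symm))
      · exact hgC z hz
    refine hg0 (funext fun n => Subtype.ext (ContinuousMap.ext fun z => ?_))
    rcases eq_or_ne n 0 with rfl | hn
    · have := HSeq.residual_apply f L z g
      rw [hh, hhz, hLg, mul_zero, sub_zero] at this
      exact this.symm
    · rw [hgn n hn z, hLg, hhz, add_zero, zero_mul]
      rfl
end
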